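/- arXiv:1404.7694 — 12 statements merged into one kernel-verified Lean document; each statement's English description precedes it below -/
import Mathlib

section
/- Let d ≥ 2 be an integer and let x₁,…,x_d be positive real numbers. With e₁ = x₁+⋯+x_d and q(τ) = ∏_{i=1}^d (τ + x_i), the Shannon entropy satisfies the half-axis integral formula H(x₁,…,x_d) = ∫₀^∞ [ d − τ·q′(τ)/q(τ) − e₁/(τ+1) ] dτ, where the integral is over τ ∈ (0,∞). Equivalently, since d − τ q′(τ)/q(τ) = Σ_{i=1}^d x_i/(τ+x_i), H(x₁,…,x_d) = ∫₀^∞ [ Σ_{i=1}^d x_i/(τ+x_i) − e₁/(τ+1) ] dτ. -/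
open MeasureTheory Real

lemma half_axis_aux (a : ℝ) (ha : 0 < a) :
    IntegrableOn (fun τ : ℝ => a / (τ + a) - a / (τ + 1)) (Set.Ioi 0) ∧
    ∫ τ in Set.Ioi (0 : ℝ), (a / (τ + a) - a / (τ + 1)) = -(a * Real.log a) := by
  have hderiv : ∀ τ ∈ Set.Ici (0 : ℝ),
      HasDerivAt (fun τ : ℝ => a * (Real.log (τ + a) - Real.log (τ + 1)))
        (a / (τ + a) - a / (τ + 1)) τ := by
    intro τ hτ
    have hτ' : 0 ≤ τ := hτ
    have h1 := ((hasDerivAt_id τ).add_const a).log (by simp; positivity)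
    have h2 := ((hasDerivAt_id τ).add_const 1).log (by simp; positivity)
    have h3 := (h1.sub h2).const_mul a
    refine h3.congr_deriv ?_
    simp only [id]
    ring
  have hlim : Filter.Tendsto (fun τ : ℝ => a * (Real.log (τ + a) - Real.log (τ + 1)))
      Filter.atTop (nhds 0) := by
    have := ((Real.tendsto_log_comp_add_sub_log a).sub
      (Real.tendsto_log_comp_add_sub_log 1)).const_mul a
    simpa using this
  have hint : IntegrableOn (fun τ : ℝ => a / (τ + a) - a / (τ + 1)) (Set.Ioi 0) := by
    rcases le_total a 1 with h | h
    · refine integrableOn_Ioi_deriv_of_nonneg' hderiv (fun τ hτ => ?_) hlim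
      have hτ' : 0 < τ := hτ
      have : a / (τ + 1) ≤ a / (τ + a) := by gcongr
      linarith
    · refine integrableOn_Ioi_deriv_of_nonpos' hderiv (fun τ hτ => ?_) hlim
      have hτ' : 0 < τ := hτ
      have : a / (τ + a) ≤ a / (τ + 1) := by gcongr
      linarith
  refine ⟨hint, ?_⟩
  rw [integral_Ioi_of_hasDerivAt_of_tendsto' hderiv hint hlim]
  simp

/-- **Half-axis formula for the Shannon entropy.**
For `d ≥ 2` and positive reals `x₁, …, x_d`, with `e₁ = Σ xᵢ` and
`q(τ) = ∏ (τ + xᵢ)`, one has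
`H(x) = ∫₀^∞ [ d − τ q'(τ)/q(τ) − e₁/(τ+1) ] dτ`, and equivalently
`H(x) = ∫₀^∞ [ Σ xᵢ/(τ+xᵢ) − e₁/(τ+1) ] dτ`. -/
theorem entropy_half_axis_formula (d : ℕ) (hd : 2 ≤ d) (x : Fin d → ℝ)
    (hx : ∀ i, 0 < x i) :
    (-∑ i, x i * Real.log (x i)) =
      ∫ τ in Set.Ioi (0 : ℝ),
        ((d : ℝ) - τ * deriv (fun s : ℝ => ∏ i, (s + x i)) τ / (∏ i, (τ + x i))
          - (∑ i, x i) / (τ + 1)) ∧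
    (-∑ i, x i * Real.log (x i)) =
      ∫ τ in Set.Ioi (0 : ℝ),
        ((∑ i, x i / (τ + x i)) - (∑ i, x i) / (τ + 1)) := by
  have key : (-∑ i, x i * Real.log (x i)) =
      ∫ τ in Set.Ioi (0 : ℝ),
        ((∑ i, x i / (τ + x i)) - (∑ i, x i) / (τ + 1)) := by
    simp_rw [Finset.sum_div, ← Finset.sum_sub_distrib]
    rw [integral_finsetSum _ (fun i _ => (half_axis_aux (x i) (hx i)).1),
      ← Finset.sum_neg_distrib]
    exact Finset.sum_congr rfl fun i _ => (half_axis_aux (x i) (hx i)).2.symm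
  refine ⟨?_, key⟩
  rw [key]
  refine setIntegral_congr_fun measurableSet_Ioi fun τ hτ => ?_
  have hτ' : 0 < τ := hτ
  have hne : ∀ i, τ + x i ≠ 0 := fun i => by
    have := hx i
    positivity
  have hl : deriv (fun s : ℝ => ∏ i, (s + x i)) τ / (∏ i, (τ + x i))
      = ∑ i, 1 / (τ + x i) := by
    have := logDeriv_prod (s := Finset.univ) (f := fun i (s : ℝ) => s + x i) (x := τ)
      (fun i _ => hne i) (fun i _ => by fun_prop)
    simpa [logDeriv_apply] using this
  have hd' : (d : ℝ) = ∑ _i : Fin d, (1 : ℝ) := by simp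
  rw [mul_div_assoc, hl, hd', Finset.mul_sum, ← Finset.sum_sub_distrib]
  congr 1
  refine Finset.sum_congr rfl fun i _ => ?_
  have := hne i
  field_simp
  ring
end

section
/- Let d ≥ 2 be an integer and let x₁,…,x_d be positive real numbers. With e₁ = x₁+⋯+x_d and q(τ) = ∏_{i=1}^d (τ + x_i), the Shannon entropy satisfies H(x₁,…,x_d) = ∫₀^∞ [ ln q(τ) + (e₁ − d) ln τ − e₁ ln(τ+1) ] dτ, where the integral is over τ ∈ (0,∞). -/
open MeasureTheory Real

open Filter Topology in
lemma aux_limit (y : ℝ) (hy : 0 < y) :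
    Tendsto (fun t : ℝ => (t + y) * Real.log (1 + y / t)) atTop (𝓝 y) := by
  have h1 := Real.tendsto_mul_log_one_add_div_atTop y
  have h2 : Tendsto (fun t : ℝ => 1 + y / t) atTop (𝓝 (1 + 0)) :=
    tendsto_const_nhds.add (tendsto_const_nhds.div_atTop tendsto_id)
  have h3 := (h2.log (by norm_num)).const_mul y
  have h4 := h1.add h3
  simp only [add_zero, Real.log_one, mul_zero] at h4
  refine h4.congr fun t => ?_
  ring

open Filter Topology in
lemma aux_single (y : ℝ) (hy : 0 < y) :
    IntegrableOn (fun t : ℝ => Real.log (t + y) + (y - 1) * Real.log t - y * Real.log (t + 1))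
      (Set.Ioi 0) ∧
    ∫ t in Set.Ioi (0 : ℝ), (Real.log (t + y) + (y - 1) * Real.log t - y * Real.log (t + 1))
      = - (y * Real.log y) := by
  set F : ℝ → ℝ := fun t => (t + y) * Real.log (t + y) + (y - 1) * (t * Real.log t)
    - y * ((t + 1) * Real.log (t + 1)) with hF
  have hc : Continuous F := by
    have h0 := Real.continuous_mul_log
    have h1 : Continuous fun t : ℝ => (t + y) * Real.log (t + y) :=
      h0.comp (continuous_id.add continuous_const)
    have h2 : Continuous fun t : ℝ => (t + 1) * Real.log (t + 1) :=
      h0.comp (continuous_id.add continuous_const)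
    exact (h1.add (h0.const_mul _)).sub (h2.const_mul _)
  have hd : ∀ t ∈ Set.Ioi (0 : ℝ), HasDerivAt F
      (Real.log (t + y) + (y - 1) * Real.log t - y * Real.log (t + 1)) t := by
    intro t ht
    have ht : 0 < t := ht
    have h1 : HasDerivAt (fun t : ℝ => (t + y) * Real.log (t + y)) (Real.log (t + y) + 1) t :=
      HasDerivAt.comp_add_const t y (Real.hasDerivAt_mul_log (by positivity))
    have h2 : HasDerivAt (fun t : ℝ => (t + 1) * Real.log (t + 1)) (Real.log (t + 1) + 1) t :=
      HasDerivAt.comp_add_const t 1 (Real.hasDerivAt_mul_log (by positivity))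
    have h3 := Real.hasDerivAt_mul_log ht.ne'
    refine ((h1.add (h3.const_mul (y - 1))).sub (h2.const_mul y)).congr_deriv ?_
    ring
  have hlim : Tendsto F atTop (𝓝 0) := by
    have h := (aux_limit y hy).sub ((aux_limit 1 one_pos).const_mul y)
    simp only [mul_one, sub_self] at h
    refine h.congr' ?_
    filter_upwards [eventually_gt_atTop 0] with t ht
    have e1 : 1 + y / t = (t + y) / t := by field_simp
    have e2 : 1 + 1 / t = (t + 1) / t := by field_simp
    rw [e1, e2, Real.log_div (by positivity) ht.ne', Real.log_div (by positivity) ht.ne']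
    simp only [hF]
    ring
  have hF0 : F 0 = y * Real.log y := by simp [hF]
  rcases le_total y 1 with h | h
  · have hs : ∀ t ∈ Set.Ioi (0 : ℝ),
        0 ≤ Real.log (t + y) + (y - 1) * Real.log t - y * Real.log (t + 1) := by
      intro t ht
      have ht : 0 < t := ht
      have := strictConcaveOn_log_Ioi.concaveOn.2 (Set.mem_Ioi.2 ht)
        (Set.mem_Ioi.2 (show 0 < t + 1 by positivity)) (show 0 ≤ 1 - y by linarith) hy.le (by ring)
      simp only [smul_eq_mul] at this
      rw [show (1 - y) * t + y * (t + 1) = t + y by ring] at this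
      linarith
    refine ⟨integrableOn_Ioi_deriv_of_nonneg hc.continuousWithinAt hd hs hlim, ?_⟩
    rw [integral_Ioi_of_hasDerivAt_of_nonneg hc.continuousWithinAt hd hs hlim, hF0]
    ring
  · have hs : ∀ t ∈ Set.Ioi (0 : ℝ),
        Real.log (t + y) + (y - 1) * Real.log t - y * Real.log (t + 1) ≤ 0 := by
      intro t ht
      have ht : 0 < t := ht
      have := strictConcaveOn_log_Ioi.concaveOn.2 (Set.mem_Ioi.2 ht)
        (Set.mem_Ioi.2 (show 0 < t + y by positivity))
        (show 0 ≤ 1 - y⁻¹ by linarith [inv_le_one_of_one_le₀ h]) (show 0 ≤ y⁻¹ by positivity) (by ring)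
      simp only [smul_eq_mul] at this
      rw [show (1 - y⁻¹) * t + y⁻¹ * (t + y) = t + 1 by field_simp; ring] at this
      have h2 := mul_le_mul_of_nonneg_left this hy.le
      have e : y * ((1 - y⁻¹) * Real.log t + y⁻¹ * Real.log (t + y))
          = (y - 1) * Real.log t + Real.log (t + y) := by field_simp
      linarith
    refine ⟨integrableOn_Ioi_deriv_of_nonpos hc.continuousWithinAt hd hs hlim, ?_⟩
    rw [integral_Ioi_of_hasDerivAt_of_nonpos hc.continuousWithinAt hd hs hlim, hF0]
    ring

/-- **Logarithmic half-axis formula for the Shannon entropy.**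
For `d ≥ 2` and positive reals `x₁, …, x_d`, with `e₁ = Σ xᵢ` and
`q(τ) = ∏ (τ + xᵢ)`, one has
`H(x) = ∫₀^∞ [ ln q(τ) + (e₁ − d) ln τ − e₁ ln(τ+1) ] dτ`. -/
theorem entropy_log_half_axis_formula (d : ℕ) (hd : 2 ≤ d) (x : Fin d → ℝ)
    (hx : ∀ i, 0 < x i) :
    (-∑ i, x i * Real.log (x i)) =
      ∫ τ in Set.Ioi (0 : ℝ),
        (Real.log (∏ i, (τ + x i)) + ((∑ i, x i) - (d : ℝ)) * Real.log τ
          - (∑ i, x i) * Real.log (τ + 1)) := by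
  have key : ∀ τ ∈ Set.Ioi (0 : ℝ),
      (Real.log (∏ i, (τ + x i)) + ((∑ i, x i) - (d : ℝ)) * Real.log τ
          - (∑ i, x i) * Real.log (τ + 1))
      = ∑ i, (Real.log (τ + x i) + (x i - 1) * Real.log τ - x i * Real.log (τ + 1)) := by
    intro τ hτ
    have hτ : 0 < τ := hτ
    rw [Real.log_prod (fun i _ => (add_pos hτ (hx i)).ne')]
    simp [Finset.sum_sub_distrib, Finset.sum_add_distrib, ← Finset.sum_mul]
  rw [setIntegral_congr_fun measurableSet_Ioi key,
    integral_finsetSum _ (fun i _ => (aux_single (x i) (hx i)).1),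
    ← Finset.sum_neg_distrib]
  exact Finset.sum_congr rfl fun i _ => (aux_single (x i) (hx i)).2.symm
end

section
/- Let d ≥ 2 be an integer and let x₁,…,x_d be positive real numbers, with elementary symmetric polynomials e₁,…,e_d and q(τ) = ∏_{i=1}^d (τ + x_i). Then the entropy satisfies H(x₁,…,x_d) = e₁ + e₁·( ∫₀^∞ [ τ^{d−1}/q(τ) − 1/(τ+1) ] dτ − 1 ) + Σ_{k=2}^d k·e_k·∫₀^∞ τ^{d−k}/q(τ) dτ. (This is the identity H = e₁ + Σ_{k=1}^d k e_k ∂H/∂e_k, with ∂H/∂e₁ = ∫₀^∞[τ^{d−1}/q − 1/(τ+1)]dτ − 1 and ∂H/∂e_k = ∫₀^∞ τ^{d−k}/q dτ for k ≥ 2.) -/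
open MeasureTheory Real

lemma aux_expand (d : ℕ) (x : Fin d → ℝ) (e : ℕ → ℝ)
    (he : ∀ k, e k = ∑ t ∈ Finset.powersetCard k (Finset.univ : Finset (Fin d)),
      ∏ i ∈ t, x i) (τ s : ℝ) :
    ∏ i, (s * x i + τ) = ∑ k ∈ Finset.range (d + 1), s ^ k * (e k * τ ^ (d - k)) := by
  classical
  rw [Finset.prod_add, Finset.sum_powerset]
  simp only [Finset.card_univ, Fintype.card_fin]
  refine Finset.sum_congr rfl fun k _ => ?_
  rw [he, Finset.sum_mul, Finset.mul_sum]
  refine Finset.sum_congr rfl fun t ht => ?_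
  have hc := (Finset.mem_powersetCard.1 ht).2
  rw [Finset.prod_mul_distrib, Finset.prod_const, Finset.prod_const, hc,
    Finset.card_sdiff_of_subset (Finset.subset_univ t), hc]
  simp only [Finset.card_univ, Fintype.card_fin]
  ring

lemma aux_euler (d : ℕ) (x : Fin d → ℝ) (e : ℕ → ℝ)
    (he : ∀ k, e k = ∑ t ∈ Finset.powersetCard k (Finset.univ : Finset (Fin d)),
      ∏ i ∈ t, x i) (τ : ℝ) :
    ∑ k ∈ Finset.range (d + 1), (k : ℝ) * (e k * τ ^ (d - k)) =
      ∑ i, (∏ j ∈ Finset.univ.erase i, (τ + x j)) * x i := by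
  classical
  have h1 : HasDerivAt (fun s : ℝ => ∏ i, (s * x i + τ))
      (∑ i, (∏ j ∈ Finset.univ.erase i, ((1 : ℝ) * x j + τ)) • x i) 1 := by
    refine HasDerivAt.fun_finset_prod (fun i _ => ?_)
    simpa using ((hasDerivAt_id (1 : ℝ)).mul_const (x i)).add_const τ
  have h2 : HasDerivAt (fun s : ℝ => ∑ k ∈ Finset.range (d + 1), s ^ k * (e k * τ ^ (d - k)))
      (∑ k ∈ Finset.range (d + 1), (k : ℝ) * (e k * τ ^ (d - k))) 1 := by
    refine HasDerivAt.fun_sum (fun k _ => ?_)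
    simpa using (hasDerivAt_pow k (1 : ℝ)).mul_const (e k * τ ^ (d - k))
  have h3 : (fun s : ℝ => ∏ i, (s * x i + τ)) =
      fun s : ℝ => ∑ k ∈ Finset.range (d + 1), s ^ k * (e k * τ ^ (d - k)) :=
    funext fun s => aux_expand d x e he τ s
  rw [h3] at h1
  rw [h2.unique h1]
  simp [add_comm]

lemma aux_euler_div (d : ℕ) (hd : 2 ≤ d) (x : Fin d → ℝ) (hx : ∀ i, 0 < x i) (e : ℕ → ℝ)
    (he : ∀ k, e k = ∑ t ∈ Finset.powersetCard k (Finset.univ : Finset (Fin d)),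
      ∏ i ∈ t, x i) (τ : ℝ) (hτ : 0 < τ) :
    e 1 * (τ ^ (d - 1) / ∏ i, (τ + x i)) +
      ∑ k ∈ Finset.Icc 2 d, (k : ℝ) * e k * (τ ^ (d - k) / ∏ i, (τ + x i)) =
      ∑ i, x i * (1 / (τ + x i)) := by
  classical
  have hq : ∏ i, (τ + x i) ≠ 0 := Finset.prod_ne_zero_iff.2 fun i _ => by
    have := hx i; positivity
  have hE := aux_euler d x e he τ
  have hsplit : ∑ k ∈ Finset.range (d + 1), (k : ℝ) * (e k * τ ^ (d - k)) =
      e 1 * τ ^ (d - 1) + ∑ k ∈ Finset.Icc 2 d, (k : ℝ) * (e k * τ ^ (d - k)) := by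
    have : Finset.range (d + 1) = insert 0 (insert 1 (Finset.Icc 2 d)) := by
      ext k; simp; omega
    rw [this, Finset.sum_insert (by simp), Finset.sum_insert (by simp)]
    simp
  have hR : ∑ i, x i * (1 / (τ + x i)) =
      (∑ i, (∏ j ∈ Finset.univ.erase i, (τ + x j)) * x i) / ∏ i, (τ + x i) := by
    rw [Finset.sum_div]
    refine Finset.sum_congr rfl fun i _ => ?_
    have h0 : τ + x i ≠ 0 := by have := hx i; positivity
    rw [mul_one_div, div_eq_div_iff h0 hq,
      ← Finset.mul_prod_erase Finset.univ (fun j => τ + x j) (Finset.mem_univ i)]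
    ring
  rw [hR, ← hE, hsplit, add_div, Finset.sum_div]
  congr 1
  · ring
  · exact Finset.sum_congr rfl fun k _ => by ring

lemma aux_int_sq (m : ℝ) (hm : 0 < m) :
    IntegrableOn (fun τ : ℝ => 1 / (τ + m) ^ 2) (Set.Ioi 0) := by
  have h := integrableOn_add_rpow_Ioi_of_lt (a := -2) (c := 0) (m := m) (by norm_num) (by linarith)
  refine h.congr_fun (fun τ hτ => ?_) measurableSet_Ioi
  have : 0 < τ + m := by have : 0 < τ := hτ; positivity
  show (τ + m) ^ (-2 : ℝ) = _
  rw [Real.rpow_neg this.le]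
  norm_num

lemma aux_int_term (d : ℕ) (x : Fin d → ℝ) (hx : ∀ i, 0 < x i) (k : ℕ)
    (hk : 2 ≤ k) (hkd : k ≤ d) :
    IntegrableOn (fun τ : ℝ => τ ^ (d - k) / ∏ i, (τ + x i)) (Set.Ioi 0) := by
  obtain ⟨m, hm, hmx⟩ : ∃ m : ℝ, 0 < m ∧ ∀ i, m ≤ x i := by
    haveI : Nonempty (Fin d) := ⟨⟨0, by omega⟩⟩
    obtain ⟨i, hi⟩ := Finite.exists_min x
    exact ⟨x i, hx i, hi⟩
  refine Integrable.mono' ((aux_int_sq m hm).mul_const (1 / m ^ (k - 2))) ?_ ?_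
  · exact (by fun_prop : Measurable (fun τ : ℝ => τ ^ (d - k) / ∏ i, (τ + x i))).aestronglyMeasurable
  · refine (ae_restrict_iff' measurableSet_Ioi).2 (Filter.Eventually.of_forall fun τ hτ => ?_)
    have hτ : 0 < τ := hτ
    have hprod : (τ + m) ^ d ≤ ∏ i, (τ + x i) := by
      have := Finset.prod_le_prod (s := (Finset.univ : Finset (Fin d))) (f := fun _ => τ + m)
        (g := fun i => τ + x i) (fun i _ => by positivity) (fun i _ => by linarith [hmx i])
      simpa using this
    have hq : 0 < ∏ i, (τ + x i) := lt_of_lt_of_le (by positivity) hprod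
    rw [Real.norm_of_nonneg (by positivity)]
    rw [one_div_mul_one_div, div_le_div_iff₀ hq (by positivity), one_mul]
    refine le_trans ?_ hprod
    calc τ ^ (d - k) * ((τ + m) ^ 2 * m ^ (k - 2))
        ≤ (τ + m) ^ (d - k) * ((τ + m) ^ 2 * (τ + m) ^ (k - 2)) := by
          gcongr <;> linarith
      _ = (τ + m) ^ d := by
          rw [← pow_add, ← pow_add]; congr 1; omega

lemma aux_int_log (a : ℝ) (ha : 0 < a) :
    IntegrableOn (fun τ : ℝ => 1 / (τ + a) - 1 / (τ + 1)) (Set.Ioi 0) := by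
  have hm : 0 < min a 1 := by positivity
  refine Integrable.mono' ((aux_int_sq (min a 1) hm).const_mul |1 - a|) ?_ ?_
  · exact (by fun_prop : Measurable (fun τ : ℝ => 1 / (τ + a) - 1 / (τ + 1))).aestronglyMeasurable
  · refine (ae_restrict_iff' measurableSet_Ioi).2 (Filter.Eventually.of_forall fun τ hτ => ?_)
    have hτ : 0 < τ := hτ
    have h1 : 1 / (τ + a) - 1 / (τ + 1) = (1 - a) * (1 / ((τ + a) * (τ + 1))) := by
      field_simp; ring
    rw [h1, norm_mul, Real.norm_eq_abs, Real.norm_of_nonneg (by positivity), sq]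
    gcongr
    · exact min_le_left _ _
    · exact min_le_right _ _

lemma aux_integral_log (a : ℝ) (ha : 0 < a) :
    ∫ τ in Set.Ioi (0 : ℝ), (1 / (τ + a) - 1 / (τ + 1)) = - Real.log a := by
  have hF : ∀ τ ∈ Set.Ici (0 : ℝ), HasDerivAt (fun τ => Real.log (τ + a) - Real.log (τ + 1))
      (1 / (τ + a) - 1 / (τ + 1)) τ := by
    intro τ hτ
    have hτ : 0 ≤ τ := hτ
    exact (((hasDerivAt_id τ).add_const a).log (by simp; positivity)).sub
      (((hasDerivAt_id τ).add_const 1).log (by simp; positivity))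
  have hlim : Filter.Tendsto (fun τ => Real.log (τ + a) - Real.log (τ + 1)) Filter.atTop
      (nhds 0) := by
    have h1 : Filter.Tendsto (fun τ : ℝ => 1 + (a - 1) / (τ + 1)) Filter.atTop (nhds (1 + 0)) :=
      tendsto_const_nhds.add (Filter.Tendsto.const_div_atTop
        (Filter.tendsto_atTop_add_const_right _ _ Filter.tendsto_id) _)
    have h2 := h1.log (by norm_num)
    rw [add_zero, Real.log_one] at h2
    refine h2.congr' ?_
    filter_upwards [Filter.eventually_gt_atTop 0] with τ hτ
    rw [← Real.log_div (by positivity) (by positivity)]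
    congr 1
    field_simp; ring
  rw [integral_Ioi_of_hasDerivAt_of_tendsto' hF (aux_int_log a ha) hlim]
  simp

/-- **The identity `H = e₁ + Σ_k k e_k ∂H/∂e_k` via half-axis integrals.**
For `d ≥ 2` and positive reals `x₁, …, x_d` with elementary symmetric
polynomials `e_k` and `q(τ) = ∏ (τ + xᵢ)`:
`H = e₁ + e₁ (∫₀^∞ [τ^{d−1}/q − 1/(τ+1)] dτ − 1) + Σ_{k=2}^d k e_k ∫₀^∞ τ^{d−k}/q dτ`. -/
theorem entropy_euler_identity (d : ℕ) (hd : 2 ≤ d) (x : Fin d → ℝ)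
    (hx : ∀ i, 0 < x i)
    (e : ℕ → ℝ)
    (he : ∀ k, e k = ∑ t ∈ Finset.powersetCard k (Finset.univ : Finset (Fin d)),
      ∏ i ∈ t, x i) :
    (-∑ i, x i * Real.log (x i)) =
      e 1
      + e 1 * ((∫ τ in Set.Ioi (0 : ℝ),
          (τ ^ (d - 1) / (∏ i, (τ + x i)) - 1 / (τ + 1))) - 1)
      + ∑ k ∈ Finset.Icc 2 d,
          (k : ℝ) * e k * ∫ τ in Set.Ioi (0 : ℝ), τ ^ (d - k) / (∏ i, (τ + x i)) := by
  have he1 : e 1 = ∑ i, x i := by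
    rw [he, Finset.powersetCard_one]; simp
  have hA : ∀ i ∈ (Finset.univ : Finset (Fin d)),
      IntegrableOn (fun τ : ℝ => x i * (1 / (τ + x i) - 1 / (τ + 1))) (Set.Ioi 0) :=
    fun i _ => (aux_int_log (x i) (hx i)).const_mul (x i)
  have hB : ∀ k ∈ Finset.Icc 2 d,
      IntegrableOn (fun τ : ℝ => (k : ℝ) * e k * (τ ^ (d - k) / ∏ i, (τ + x i))) (Set.Ioi 0) :=
    fun k hk => (aux_int_term d x hx k (Finset.mem_Icc.1 hk).1 (Finset.mem_Icc.1 hk).2).const_mul _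
  have key : e 1 * (∫ τ in Set.Ioi (0 : ℝ), (τ ^ (d - 1) / (∏ i, (τ + x i)) - 1 / (τ + 1))) =
      (∑ i, x i * (- Real.log (x i))) - ∑ k ∈ Finset.Icc 2 d,
          (k : ℝ) * e k * ∫ τ in Set.Ioi (0 : ℝ), τ ^ (d - k) / (∏ i, (τ + x i)) := by
    rw [← integral_const_mul]
    have hcongr : ∫ τ in Set.Ioi (0 : ℝ),
        e 1 * (τ ^ (d - 1) / (∏ i, (τ + x i)) - 1 / (τ + 1)) =
        ∫ τ in Set.Ioi (0 : ℝ), ((∑ i, x i * (1 / (τ + x i) - 1 / (τ + 1))) -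
          ∑ k ∈ Finset.Icc 2 d, (k : ℝ) * e k * (τ ^ (d - k) / ∏ i, (τ + x i))) := by
      refine setIntegral_congr_fun measurableSet_Ioi fun τ hτ => ?_
      have h := aux_euler_div d hd x hx e he τ hτ
      have h2 : ∑ i, x i * (1 / (τ + x i) - 1 / (τ + 1)) =
          ∑ i, x i * (1 / (τ + x i)) - e 1 * (1 / (τ + 1)) := by
        rw [he1, Finset.sum_mul, ← Finset.sum_sub_distrib]
        exact Finset.sum_congr rfl fun i _ => by ring
      simp only [h2]
      linear_combination h
    rw [hcongr, integral_sub (integrable_finset_sum _ hA) (integrable_finset_sum _ hB),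
      integral_finset_sum _ hA, integral_finset_sum _ hB]
    simp only [integral_const_mul]
    congr 1
    exact Finset.sum_congr rfl fun i _ => by rw [aux_integral_log (x i) (hx i)]
  have hneg : ∑ i, x i * (- Real.log (x i)) = -∑ i, x i * Real.log (x i) := by simp
  rw [hneg] at key
  linear_combination -key
end

section
/- Let d ≥ 2 be an integer and let x₁,…,x_d be pairwise distinct positive real numbers, with elementary symmetric polynomials e₁,…,e_d and q(τ) = ∏_{i=1}^d (τ + x_i). Then the subentropy satisfies Q(x₁,…,x_d) = e₁ + e₁·( ∫₀^∞ [ τ^{d−1}/q(τ) − 1/(τ+1) ] dτ − 1 ) + Σ_{k=2}^d e_k·∫₀^∞ τ^{d−k}/q(τ) dτ. (This is the identity Q = e₁ + Σ_{k=1}^d e_k ∂H/∂e_k, where ∂H/∂e₁ = ∫₀^∞[τ^{d−1}/q − 1/(τ+1)]dτ − 1 and ∂H/∂e_k = ∫₀^∞ τ^{d−k}/q dτ for k ≥ 2.) -/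
open MeasureTheory Real

lemma base_aux (a : ℝ) (ha : 0 < a) :
    IntegrableOn (fun τ : ℝ => 1 / (τ + a) - 1 / (τ + 1)) (Set.Ioi 0) ∧
    ∫ τ in Set.Ioi (0 : ℝ), (1 / (τ + a) - 1 / (τ + 1)) = - Real.log a := by
  have hder : ∀ τ ∈ Set.Ici (0 : ℝ), HasDerivAt (fun τ : ℝ => Real.log (τ + a) - Real.log (τ + 1))
      (1 / (τ + a) - 1 / (τ + 1)) τ := by
    intro τ hτ
    have h0 : (0 : ℝ) ≤ τ := hτ
    exact (((hasDerivAt_id τ).add_const a).log (by simp; positivity)).sub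
      (((hasDerivAt_id τ).add_const 1).log (by simp; positivity))
  have hlim : Filter.Tendsto (fun τ : ℝ => Real.log (τ + a) - Real.log (τ + 1))
      Filter.atTop (nhds 0) := by
    have h1 : Filter.Tendsto (fun τ : ℝ => 1 + (a - 1) * (τ + 1)⁻¹) Filter.atTop (nhds 1) := by
      have := (((Filter.tendsto_atTop_add_const_right Filter.atTop (1 : ℝ)
        Filter.tendsto_id).inv_tendsto_atTop).const_mul (a - 1)).const_add 1
      simpa using this
    have h2 := h1.log one_ne_zero
    rw [Real.log_one] at h2
    refine h2.congr' ?_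
    filter_upwards [Filter.eventually_ge_atTop (0 : ℝ)] with τ hτ
    rw [← Real.log_div (by positivity) (by positivity)]
    congr 1
    field_simp
    ring
  rcases le_total a 1 with h | h
  · have hs : ∀ τ ∈ Set.Ioi (0 : ℝ), 0 ≤ 1 / (τ + a) - 1 / (τ + 1) := by
      intro τ hτ
      have h0 : (0 : ℝ) < τ := hτ
      rw [sub_nonneg]
      exact one_div_le_one_div_of_le (by positivity) (by linarith)
    refine ⟨integrableOn_Ioi_deriv_of_nonneg' hder hs hlim, ?_⟩
    rw [integral_Ioi_of_hasDerivAt_of_nonneg' hder hs hlim]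
    simp
  · have hs : ∀ τ ∈ Set.Ioi (0 : ℝ), 1 / (τ + a) - 1 / (τ + 1) ≤ 0 := by
      intro τ hτ
      have h0 : (0 : ℝ) < τ := hτ
      rw [sub_nonpos]
      exact one_div_le_one_div_of_le (by positivity) (by linarith)
    refine ⟨integrableOn_Ioi_deriv_of_nonpos' hder hs hlim, ?_⟩
    rw [integral_Ioi_of_hasDerivAt_of_nonpos' hder hs hlim]
    simp

lemma pf_aux (d : ℕ) (x : Fin d → ℝ)
    (hx : ∀ i, 0 < x i) (hdist : ∀ i j, i ≠ j → x i ≠ x j) (m : ℕ) (hm : m < d) :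
    ∫ τ in Set.Ioi (0 : ℝ),
      (τ ^ m / (∏ i, (τ + x i)) - (if m = d - 1 then 1 else 0) * (1 / (τ + 1))) =
    - ∑ i, ((-x i) ^ m / ∏ j ∈ Finset.univ.erase i, (-x i - -x j)) * Real.log (x i) := by
  have hinj : Set.InjOn (fun i => -x i) ((Finset.univ : Finset (Fin d)) : Set (Fin d)) := by
    intro i _ j _ hij
    by_contra hne
    exact hdist i j hne (neg_injective hij)
  have hdeg : (Polynomial.X ^ m : Polynomial ℝ).degree < (Finset.univ : Finset (Fin d)).card := by
    simpa using hm
  have hc := Lagrange.coeff_eq_sum hinj hdeg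
  simp only [Finset.card_univ, Fintype.card_fin, Polynomial.coeff_X_pow, Polynomial.eval_pow,
    Polynomial.eval_X] at hc
  have hI := Lagrange.eq_interpolate hinj hdeg
  have key : ∀ τ ∈ Set.Ioi (0 : ℝ),
      τ ^ m / (∏ i, (τ + x i)) - (if m = d - 1 then 1 else 0) * (1 / (τ + 1)) =
      ∑ i, ((-x i) ^ m / ∏ j ∈ Finset.univ.erase i, (-x i - -x j)) *
        (1 / (τ + x i) - 1 / (τ + 1)) := by
    intro τ hτ
    have h0 : (0 : ℝ) < τ := hτ
    have h1 := congrArg (Polynomial.eval τ) hI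
    rw [Lagrange.eval_interpolate_not_at_node] at h1
    · simp only [Polynomial.eval_pow, Polynomial.eval_X, Lagrange.eval_nodal, sub_neg_eq_add,
        Lagrange.nodalWeight] at h1
      have hq : ∏ i, (τ + x i) ≠ 0 :=
        Finset.prod_ne_zero_iff.mpr fun i _ => (add_pos h0 (hx i)).ne'
      rw [h1, mul_div_cancel_left₀ _ hq]
      simp_rw [mul_sub, Finset.sum_sub_distrib, ← Finset.sum_mul]
      rw [← hc]
      congr 1
      · refine Finset.sum_congr rfl fun i _ => ?_
        rw [Finset.prod_inv_distrib]
        simp only [sub_neg_eq_add]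
        rw [div_eq_mul_inv, one_div]
        ring
      · congr 1
        simp [eq_comm]
    · intro i _
      have := hx i
      show τ ≠ -x i
      linarith
  rw [setIntegral_congr_fun measurableSet_Ioi key, integral_finsetSum]
  · rw [← Finset.sum_neg_distrib]
    refine Finset.sum_congr rfl fun i _ => ?_
    rw [integral_const_mul, (base_aux _ (hx i)).2]
    ring
  · intro i _
    exact (base_aux _ (hx i)).1.const_mul _

lemma vieta_aux (d : ℕ) (x : Fin d → ℝ) (e : ℕ → ℝ)
    (he : ∀ k, e k = ∑ t ∈ Finset.powersetCard k (Finset.univ : Finset (Fin d)),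
      ∏ i ∈ t, x i) (y : ℝ) :
    ∏ i, (x i + y) = ∑ k ∈ Finset.range (d + 1), e k * y ^ (d - k) := by
  rw [Finset.prod_add, Finset.sum_powerset]
  simp only [Finset.card_univ, Fintype.card_fin]
  refine Finset.sum_congr rfl fun k _ => ?_
  rw [he, Finset.sum_mul]
  refine Finset.sum_congr rfl fun t ht => ?_
  rw [Finset.mem_powersetCard] at ht
  rw [Finset.prod_const, Finset.card_sdiff_of_subset ht.1, ht.2]
  simp

/-- **The identity `Q = e₁ + Σ_k e_k ∂H/∂e_k` via half-axis integrals.**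
For `d ≥ 2` and pairwise distinct positive reals `x₁, …, x_d` with elementary
symmetric polynomials `e_k` and `q(τ) = ∏ (τ + xᵢ)`, the subentropy satisfies
`Q = e₁ + e₁ (∫₀^∞ [τ^{d−1}/q − 1/(τ+1)] dτ − 1) + Σ_{k=2}^d e_k ∫₀^∞ τ^{d−k}/q dτ`. -/
theorem subentropy_euler_identity (d : ℕ) (hd : 2 ≤ d) (x : Fin d → ℝ)
    (hx : ∀ i, 0 < x i) (hdist : ∀ i j, i ≠ j → x i ≠ x j)
    (e : ℕ → ℝ)
    (he : ∀ k, e k = ∑ t ∈ Finset.powersetCard k (Finset.univ : Finset (Fin d)),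
      ∏ i ∈ t, x i) :
    (-∑ i, (x i ^ d / ∏ j ∈ Finset.univ.erase i, (x i - x j)) * Real.log (x i)) =
      e 1
      + e 1 * ((∫ τ in Set.Ioi (0 : ℝ),
          (τ ^ (d - 1) / (∏ i, (τ + x i)) - 1 / (τ + 1))) - 1)
      + ∑ k ∈ Finset.Icc 2 d,
          e k * ∫ τ in Set.Ioi (0 : ℝ), τ ^ (d - k) / (∏ i, (τ + x i)) := by
  have e0 : e 0 = 1 := by simp [he]
  have h1 := pf_aux d x hx hdist (d - 1) (by omega)
  simp only [if_true, one_mul] at h1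
  have h2 : ∀ k ∈ Finset.Icc 2 d,
      e k * ∫ τ in Set.Ioi (0 : ℝ), τ ^ (d - k) / (∏ i, (τ + x i)) =
      e k * (- ∑ i, ((-x i) ^ (d - k) / ∏ j ∈ Finset.univ.erase i, (-x i - -x j)) *
        Real.log (x i)) := by
    intro k hk
    rw [Finset.mem_Icc] at hk
    have h := pf_aux d x hx hdist (d - k) (by omega)
    rw [if_neg (by omega)] at h
    simp only [zero_mul, sub_zero] at h
    rw [h]
  rw [Finset.sum_congr rfl h2, h1]
  have hs : ∀ i, e 1 * (-x i) ^ (d - 1) + ∑ k ∈ Finset.Icc 2 d, e k * (-x i) ^ (d - k)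
      = -(-x i) ^ d := by
    intro i
    have hv := vieta_aux d x e he (-x i)
    rw [Finset.prod_eq_zero (Finset.mem_univ i) (by ring), Finset.range_eq_Ico,
      Finset.sum_eq_sum_Ico_succ_bot (by omega), Finset.sum_eq_sum_Ico_succ_bot (by omega),
      e0] at hv
    have hI : Finset.Ico (0 + 1 + 1) (d + 1) = Finset.Icc 2 d := by
      ext k; simp
    rw [hI] at hv
    simp only [zero_add, Nat.sub_zero, one_mul] at hv
    linarith
  have hp : ∀ i, ∏ j ∈ Finset.univ.erase i, (-x i - -x j) =
      (-1) ^ (d - 1) * ∏ j ∈ Finset.univ.erase i, (x i - x j) := by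
    intro i
    have : (d - 1) = (Finset.univ.erase i).card := by simp
    rw [this, ← Finset.prod_const, ← Finset.prod_mul_distrib]
    exact Finset.prod_congr rfl fun j _ => by ring
  have ht : ∀ i, x i ^ d / ∏ j ∈ Finset.univ.erase i, (x i - x j) =
      (e 1 * (-x i) ^ (d - 1) + ∑ k ∈ Finset.Icc 2 d, e k * (-x i) ^ (d - k)) /
        ∏ j ∈ Finset.univ.erase i, (-x i - -x j) := by
    intro i
    rw [hs, hp]
    obtain ⟨n, rfl⟩ : ∃ n, d = n + 1 := ⟨d - 1, by omega⟩
    rw [neg_pow (x i), Nat.add_sub_cancel, pow_succ (-1 : ℝ) n]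
    rw [show -((-1 : ℝ) ^ n * -1 * x i ^ (n + 1)) = (-1) ^ n * x i ^ (n + 1) by ring]
    rw [mul_div_mul_left _ _ (pow_ne_zero _ (by norm_num))]
  have hfin : ∑ i, (x i ^ d / ∏ j ∈ Finset.univ.erase i, (x i - x j)) * Real.log (x i) =
      e 1 * ∑ i, ((-x i) ^ (d - 1) / ∏ j ∈ Finset.univ.erase i, (-x i - -x j)) * Real.log (x i)
      + ∑ k ∈ Finset.Icc 2 d, e k *
        ∑ i, ((-x i) ^ (d - k) / ∏ j ∈ Finset.univ.erase i, (-x i - -x j)) * Real.log (x i) := by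
    simp_rw [ht, Finset.mul_sum]
    rw [Finset.sum_comm, ← Finset.sum_add_distrib]
    refine Finset.sum_congr rfl fun i _ => ?_
    rw [add_div, add_mul, Finset.sum_div, Finset.sum_mul]
    congr 1
    · ring
    · exact Finset.sum_congr rfl fun k _ => by ring
  rw [hfin]
  simp only [mul_neg, Finset.sum_neg_distrib]
  ring
end

section
/- Let d ≥ 2 be an integer, let x₁,…,x_d be positive real numbers with e₁ = x₁+⋯+x_d, and let q(τ) = ∏_{i=1}^d (τ + x_i). Then for every integer k with 2 ≤ k ≤ d, ∫₀^∞ τ^{d−k}/q(τ) dτ ≥ d^{k−1} / ( (d−k+1) · binom(d−1, k−2) · e₁^{k−1} ) > 0. (That is, the partial derivative ∂H/∂e_k of the entropy with respect to the k-th elementary symmetric polynomial is bounded below by the positive constant c_{d,k} = d^{k−1}/((d−k+1)·binom(d−1,k−2)·e₁^{k−1}).) -/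
open MeasureTheory Real

lemma aux_tendsto (a : ℝ) (ha : 0 < a) (m j : ℕ) :
    Filter.Tendsto (fun t : ℝ => t ^ m / (t + a) ^ (m + j + 1)) Filter.atTop (nhds 0) := by
  have h1 : Filter.Tendsto (fun t : ℝ => (t + a)⁻¹) Filter.atTop (nhds 0) :=
    tendsto_inv_atTop_zero.comp (Filter.tendsto_atTop_add_const_right _ a Filter.tendsto_id)
  have h2 : Filter.Tendsto (fun t : ℝ => ((t + a)⁻¹) ^ (j + 1)) Filter.atTop (nhds 0) := by
    simpa using h1.pow (j + 1)
  refine squeeze_zero' ?_ ?_ h2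
  · filter_upwards [Filter.eventually_ge_atTop 0] with t ht
    positivity
  · filter_upwards [Filter.eventually_ge_atTop 0] with t ht
    have hta : 0 < t + a := by linarith
    have : t ^ m ≤ (t + a) ^ m := by gcongr; linarith
    rw [inv_pow, add_assoc, pow_add, div_le_iff₀ (by positivity)]
    have e : ((t + a) ^ (j + 1))⁻¹ * ((t + a) ^ m * (t + a) ^ (j + 1)) = (t + a) ^ m := by
      field_simp
    rw [e]; exact this

lemma aux_integral (a : ℝ) (ha : 0 < a) (j m : ℕ) :
    IntegrableOn (fun t : ℝ => t ^ m / (t + a) ^ (m + j + 2)) (Set.Ioi 0) ∧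
    ∫ t in Set.Ioi (0 : ℝ), t ^ m / (t + a) ^ (m + j + 2) =
      (m.factorial * j.factorial : ℝ) / ((m + j + 1).factorial * a ^ (j + 1)) := by
  induction m with
  | zero =>
    have hder : ∀ t ∈ Set.Ici (0 : ℝ), HasDerivAt
        (fun t : ℝ => -(((j + 1 : ℕ) : ℝ)⁻¹ * (t ^ 0 / (t + a) ^ (0 + j + 1))))
        (t ^ 0 / (t + a) ^ (0 + j + 2)) t := by
      intro t ht
      have ht : 0 ≤ t := ht
      have hta : 0 < t + a := by linarith
      have h := (((hasDerivAt_pow 0 t).div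
        (((hasDerivAt_id t).add_const a).pow (0 + j + 1))
        (by simp only [Pi.pow_apply, id]; positivity)).const_mul ((j + 1 : ℕ) : ℝ)⁻¹).neg
      refine HasDerivAt.congr_deriv h ?_
      simp only [Pi.pow_apply, id, Nat.zero_add, Nat.add_sub_cancel]
      push_cast
      field_simp
      ring
    have hlim := ((aux_tendsto a ha 0 j).const_mul ((j + 1 : ℕ) : ℝ)⁻¹).neg
    have hIntg := integrableOn_Ioi_deriv_of_nonneg' hder
      (fun t ht => by have : 0 < t := ht; positivity) hlim
    refine ⟨hIntg, ?_⟩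
    rw [integral_Ioi_of_hasDerivAt_of_tendsto' hder hIntg hlim]
    simp [Nat.factorial_succ]
    have := Nat.factorial_ne_zero j
    field_simp
  | succ m ih =>
    obtain ⟨hi, hv⟩ := ih
    have hi' : IntegrableOn (fun t : ℝ => t ^ (m + 1) / (t + a) ^ (m + 1 + j + 2))
        (Set.Ioi 0) := by
      refine Integrable.mono' hi ?_ ?_
      · refine ContinuousOn.aestronglyMeasurable ?_ measurableSet_Ioi
        refine ContinuousOn.div (by fun_prop) (by fun_prop) ?_
        intro t ht
        have : 0 < t := ht
        positivity
      · refine (ae_restrict_iff' measurableSet_Ioi).2 (Filter.Eventually.of_forall ?_)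
        intro t ht
        have ht : 0 < t := ht
        rw [Real.norm_of_nonneg (by positivity)]
        rw [div_le_div_iff₀ (by positivity) (by positivity)]
        have : t ^ m * (t + a) ^ (m + 1 + j + 2) - t ^ (m + 1) * (t + a) ^ (m + j + 2)
          = t ^ m * (t + a) ^ (m + j + 2) * a := by ring
        have : 0 < t ^ m * (t + a) ^ (m + j + 2) * a := by positivity
        linarith
    refine ⟨hi', ?_⟩
    have hder : ∀ t ∈ Set.Ici (0 : ℝ), HasDerivAt
        (fun t : ℝ => t ^ (m + 1) / (t + a) ^ (m + 1 + j + 1))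
        (((m + 1 : ℕ) : ℝ) * (t ^ m / (t + a) ^ (m + j + 2)) -
          ((m + j + 2 : ℕ) : ℝ) * (t ^ (m + 1) / (t + a) ^ (m + 1 + j + 2))) t := by
      intro t ht
      have ht : 0 ≤ t := ht
      have hta : 0 < t + a := by linarith
      have h := (hasDerivAt_pow (m + 1) t).div
        (((hasDerivAt_id t).add_const a).pow (m + 1 + j + 1))
        (by simp only [Pi.pow_apply, id]; positivity)
      refine HasDerivAt.congr_deriv h ?_
      simp only [Pi.pow_apply, id, Nat.add_sub_cancel]
      push_cast
      field_simp
      ring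
    have hA := hi.const_mul ((m + 1 : ℕ) : ℝ)
    have hB := hi'.const_mul ((m + j + 2 : ℕ) : ℝ)
    have h := integral_Ioi_of_hasDerivAt_of_tendsto' hder (hA.sub hB)
      (aux_tendsto a ha (m + 1) j)
    rw [integral_sub hA hB, integral_const_mul, integral_const_mul, hv] at h
    have e : m + 1 + j + 1 = (m + j + 1) + 1 := by ring
    rw [e, Nat.factorial_succ (m + j + 1), Nat.factorial_succ m]
    have h0 := Nat.factorial_ne_zero (m + j + 1)
    have h2 : ((m + j + 2 : ℕ) : ℝ) ≠ 0 := by positivity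
    apply mul_left_cancel₀ h2
    simp at h
    push_cast
    rw [sub_eq_zero] at h
    rw [← h]
    field_simp
    try ring

lemma aux_amgm (d : ℕ) (hd : 0 < d) (y : Fin d → ℝ) (hy : ∀ i, 0 ≤ y i) :
    ∏ i, y i ≤ ((∑ i, y i) / d) ^ d := by
  have hd' : (0 : ℝ) < d := by exact_mod_cast hd
  have h := Real.geom_mean_le_arith_mean_weighted Finset.univ (fun _ : Fin d => (d : ℝ)⁻¹) y
    (fun _ _ => by positivity) (by simp [hd'.ne']) (fun i _ => hy i)
  rw [Real.finsetProd_rpow _ _ (fun i _ => hy i), ← Finset.mul_sum] at h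
  have hp : 0 ≤ ∏ i, y i := Finset.prod_nonneg (fun i _ => hy i)
  calc ∏ i, y i = ((∏ i, y i) ^ ((d : ℝ)⁻¹)) ^ d := (Real.rpow_inv_natCast_pow hp hd.ne').symm
    _ ≤ _ := by
      rw [div_eq_inv_mul]
      gcongr

/-- **Positive lower bound on `∂H/∂e_k`.**
For `d ≥ 2`, positive reals `x₁, …, x_d` with `e₁ = Σ xᵢ`,
`q(τ) = ∏ (τ + xᵢ)`, and `2 ≤ k ≤ d`, the half-axis integral for `∂H/∂e_k`
satisfies `∫₀^∞ τ^{d−k}/q(τ) dτ ≥ c_{d,k} > 0` where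
`c_{d,k} = d^{k−1}/((d−k+1)·C(d−1,k−2)·e₁^{k−1})`. -/
theorem entropy_partial_lower_bound (d k : ℕ) (hd : 2 ≤ d) (hk2 : 2 ≤ k) (hkd : k ≤ d)
    (x : Fin d → ℝ) (hx : ∀ i, 0 < x i) :
    0 < (d : ℝ) ^ (k - 1) /
        (((d - k + 1 : ℕ) : ℝ) * ((d - 1).choose (k - 2) : ℝ) * (∑ i, x i) ^ (k - 1)) ∧
    (d : ℝ) ^ (k - 1) /
        (((d - k + 1 : ℕ) : ℝ) * ((d - 1).choose (k - 2) : ℝ) * (∑ i, x i) ^ (k - 1)) ≤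
      ∫ τ in Set.Ioi (0 : ℝ), τ ^ (d - k) / (∏ i, (τ + x i)) := by
  have hd0 : (0 : ℝ) < d := by positivity
  have : Nonempty (Fin d) := ⟨⟨0, by omega⟩⟩
  have hS : 0 < ∑ i, x i := Finset.sum_pos (fun i _ => hx i) Finset.univ_nonempty
  have hch : 0 < (d - 1).choose (k - 2) := Nat.choose_pos (by omega)
  refine ⟨by positivity, ?_⟩
  obtain ⟨j, rfl⟩ := Nat.exists_eq_add_of_le' hk2
  obtain ⟨m, rfl⟩ := Nat.exists_eq_add_of_le' hkd
  have e1 : m + (j + 2) - (j + 2) = m := by omega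
  have e2 : m + (j + 2) - 1 = m + j + 1 := by omega
  have e3 : j + 2 - 1 = j + 1 := by omega
  have e4 : j + 2 - 2 = j := by omega
  rw [e2, e4] at hch
  rw [e1, e2, e3, e4]
  obtain ⟨i0, hi0⟩ := Finite.exists_min x
  obtain ⟨hic, -⟩ := aux_integral (x i0) (hx i0) j m
  set a : ℝ := (∑ i, x i) / ((m + (j + 2) : ℕ) : ℝ) with ha_def
  have ha : 0 < a := by positivity
  obtain ⟨hia, hva⟩ := aux_integral a ha j m
  have hIntg : IntegrableOn (fun t : ℝ => t ^ m / ∏ i, (t + x i)) (Set.Ioi 0) := by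
    refine Integrable.mono' hic ?_ ?_
    · refine ContinuousOn.aestronglyMeasurable ?_ measurableSet_Ioi
      refine ContinuousOn.div (by fun_prop) (by fun_prop) ?_
      intro t ht
      have ht : 0 < t := ht
      exact (Finset.prod_pos (fun i _ => add_pos ht (hx i))).ne'
    · refine (ae_restrict_iff' measurableSet_Ioi).2 (Filter.Eventually.of_forall ?_)
      intro t ht
      have ht : 0 < t := ht
      have hp : 0 < ∏ i, (t + x i) := Finset.prod_pos (fun i _ => add_pos ht (hx i))
      rw [Real.norm_of_nonneg (by positivity)]
      have h0 := hx i0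
      have : (t + x i0) ^ (m + j + 2) ≤ ∏ i, (t + x i) := by
        calc (t + x i0) ^ (m + j + 2) = ∏ _i : Fin (m + (j + 2)), (t + x i0) := by
              simp [add_assoc]
          _ ≤ _ := Finset.prod_le_prod (fun i _ => by positivity)
              (fun i _ => by linarith [hi0 i])
      gcongr
  have hmono : ∫ t in Set.Ioi (0 : ℝ), t ^ m / (t + a) ^ (m + j + 2) ≤
      ∫ t in Set.Ioi (0 : ℝ), t ^ m / ∏ i, (t + x i) := by
    refine setIntegral_mono_on hia hIntg measurableSet_Ioi ?_
    intro t ht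
    have ht : 0 < t := ht
    have hp : 0 < ∏ i, (t + x i) := Finset.prod_pos (fun i _ => add_pos ht (hx i))
    have h := aux_amgm (m + (j + 2)) (by omega) (fun i => t + x i)
      (fun i => (add_pos ht (hx i)).le)
    have e : (∑ i, (t + x i)) / ((m + (j + 2) : ℕ) : ℝ) = t + a := by
      rw [Finset.sum_add_distrib, add_div, ← ha_def]
      simp only [Finset.sum_const, Finset.card_univ, Fintype.card_fin, nsmul_eq_mul]
      rw [mul_div_cancel_left₀ _ hd0.ne']
    rw [e] at h
    replace h : ∏ i, (t + x i) ≤ (t + a) ^ (m + j + 2) := h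
    gcongr
  refine le_trans (le_of_eq ?_) hmono
  rw [hva, ha_def, div_pow]
  have hc := Nat.choose_mul_factorial_mul_factorial (n := m + j + 1) (k := j) (by omega)
  have e5 : m + j + 1 - j = m + 1 := by omega
  rw [e5, Nat.factorial_succ m] at hc
  rw [← hc]
  have f1 := Nat.factorial_ne_zero j
  have f2 := Nat.factorial_ne_zero m
  push_cast at hd0 ⊢
  field_simp
end

section
/- Let d ≥ 2 be an integer and let x₁,…,x_d be pairwise distinct positive real numbers with elementary symmetric polynomials e₁,…,e_d. Then the entropy and subentropy satisfy H(x₁,…,x_d) − Q(x₁,…,x_d) ≥ Σ_{k=2}^d d^{k−1} e_k / ( binom(d−1, k−1) · e₁^{k−1} ). -/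
open MeasureTheory Real

lemma beta_int (n : ℕ) : ∀ m : ℕ, ∫ s in (0:ℝ)..1, s ^ m * (1 - s) ^ n
    = (m.factorial * n.factorial : ℝ) / ((m + n + 1).factorial : ℝ) := by
  induction n with
  | zero =>
    intro m
    simp [Nat.factorial_succ]
    field_simp
  | succ n ih =>
    intro m
    have hder : ∀ s ∈ Set.uIcc (0:ℝ) 1, HasDerivAt (fun s : ℝ => s ^ (m+1) * (1 - s) ^ (n+1))
        (((m:ℝ)+1) * (s ^ m * (1 - s) ^ (n+1)) - ((n:ℝ)+1) * (s ^ (m+1) * (1 - s) ^ n)) s := by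
      intro s _
      have h1 := hasDerivAt_pow (m+1) s
      have h2 := ((hasDerivAt_id s).const_sub 1).pow (n+1)
      refine (h1.mul h2).congr_deriv ?_
      simp
      ring
    have hFTC := intervalIntegral.integral_eq_sub_of_hasDerivAt hder
      (Continuous.intervalIntegrable (by fun_prop) _ _)
    rw [intervalIntegral.integral_sub (Continuous.intervalIntegrable (by fun_prop) _ _)
      (Continuous.intervalIntegrable (by fun_prop) _ _), intervalIntegral.integral_const_mul,
      intervalIntegral.integral_const_mul, ih (m+1)] at hFTC
    simp only [sub_self, ne_eq, Nat.succ_ne_zero, not_false_eq_true, zero_pow, mul_zero,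
      zero_mul] at hFTC
    have hm : (m:ℝ) + 1 ≠ 0 := by positivity
    have : ∫ s in (0:ℝ)..1, s ^ m * (1 - s) ^ (n+1) =
      ((n:ℝ)+1) * (((m+1).factorial * n.factorial : ℝ) / ((m + 1 + n + 1).factorial : ℝ)) / (m+1) := by
      rw [eq_div_iff hm]; linarith
    rw [this, show m + 1 + n + 1 = m + (n + 1) + 1 by ring, Nat.factorial_succ m,
      Nat.factorial_succ n]
    push_cast
    field_simp

lemma prod_le_amgm {d : ℕ} (hd : 0 < d) (y : Fin d → ℝ) (hy : ∀ i, 0 ≤ y i) :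
    ∏ i, y i ≤ ((∑ i, y i) / d) ^ d := by
  have hd' : (d:ℝ) ≠ 0 := by positivity
  have h := Real.geom_mean_le_arith_mean Finset.univ (fun _ => (1:ℝ)) y (by simp) (by simpa using hd)
    (fun i _ => hy i)
  simp only [Real.rpow_one, Finset.sum_const, Finset.card_univ, Fintype.card_fin, nsmul_eq_mul,
    mul_one, one_mul] at h
  have h0 : 0 ≤ ∏ i, y i := Finset.prod_nonneg fun i _ => hy i
  have := pow_le_pow_left₀ (Real.rpow_nonneg h0 _) h d
  rwa [Real.rpow_inv_natCast_pow h0 (by omega)] at this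

lemma expand {d : ℕ} (x : Fin d → ℝ) (e : ℕ → ℝ)
    (he : ∀ k, e k = ∑ t ∈ Finset.powersetCard k (Finset.univ : Finset (Fin d)),
      ∏ i ∈ t, x i) (t s : ℝ) :
    ∏ i, (s * x i + t) = ∑ k ∈ Finset.range (d+1), e k * s ^ k * t ^ (d - k) := by
  rw [Finset.prod_add, Finset.sum_powerset]
  simp only [Finset.card_univ, Fintype.card_fin]
  refine Finset.sum_congr rfl fun k _ => ?_
  rw [he, Finset.sum_mul, Finset.sum_mul]
  refine Finset.sum_congr rfl fun u hu => ?_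
  have hu := (Finset.mem_powersetCard.1 hu).2
  rw [Finset.prod_mul_distrib, Finset.prod_const, Finset.prod_const, hu,
    Finset.card_sdiff_of_subset (Finset.subset_univ _), hu]
  simp only [Finset.card_univ, Fintype.card_fin]
  ring

lemma expand_deriv {d : ℕ} (x : Fin d → ℝ) (e : ℕ → ℝ)
    (he : ∀ k, e k = ∑ t ∈ Finset.powersetCard k (Finset.univ : Finset (Fin d)),
      ∏ i ∈ t, x i) (t : ℝ) :
    ∑ i, (∏ j ∈ Finset.univ.erase i, (x j + t)) * x i
      = ∑ k ∈ Finset.range (d+1), k * e k * t ^ (d - k) := by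
  have h1 : HasDerivAt (fun s : ℝ => ∏ i, (s * x i + t))
      (∑ i, (∏ j ∈ Finset.univ.erase i, (x j + t)) * x i) 1 := by
    have := HasDerivAt.fun_finsetProd (u := Finset.univ) (x := (1:ℝ))
      (f := fun i s => s * x i + t) (f' := fun i => x i)
      (fun i _ => by simpa using ((hasDerivAt_id (1:ℝ)).mul_const (x i)).add_const t)
    simpa using this
  have h2 : HasDerivAt (fun s : ℝ => ∏ i, (s * x i + t))
      (∑ k ∈ Finset.range (d+1), k * e k * t ^ (d - k)) 1 := by
    simp_rw [expand x e he t]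
    refine HasDerivAt.fun_sum fun k _ => ?_
    refine (((hasDerivAt_pow k (1:ℝ)).const_mul (e k)).mul_const (t ^ (d-k))).congr_deriv ?_
    simp; left; ring
  exact h1.unique h2

/-- partial fractions -/
lemma partial_frac {d : ℕ} (x : Fin d → ℝ) (hd : 0 < d)
    (hx : ∀ i, 0 < x i) (hinj : Function.Injective x) :
    (∑ i, x i ^ d / ∏ j ∈ Finset.univ.erase i, (x i - x j) = ∑ i, x i) ∧
    ∀ t : ℝ, 0 ≤ t → t ^ d / ∏ i, (x i + t) =
      1 - ∑ i, (x i ^ d / ∏ j ∈ Finset.univ.erase i, (x i - x j)) / (x i + t) := by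
  set P : Polynomial ℝ := Polynomial.X ^ d - Lagrange.nodal Finset.univ x with hP
  have hdeg : P.degree < (Finset.univ : Finset (Fin d)).card := by
    have := Polynomial.degree_sub_lt_left (p := (Polynomial.X ^ d : Polynomial ℝ))
      (q := Lagrange.nodal Finset.univ x) (by simp [Lagrange.degree_nodal]) (by simp)
      (by rw [Lagrange.nodal_monic.leadingCoeff]; simp)
    simpa using this
  have hev : ∀ i, P.eval (x i) = x i ^ d := fun i => by
    simp [hP, Lagrange.eval_nodal_at_node]
  constructor
  · have h := Lagrange.coeff_eq_sum (hinj.injOn) hdeg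
    simp only [hev] at h
    rw [← h, hP, Polynomial.coeff_sub, Lagrange.nodal_eq,
      Polynomial.prod_X_sub_C_coeff_card_pred _ _ (by simpa using hd), Polynomial.coeff_X_pow,
      if_neg (by simp; omega)]
    simp
  · intro t ht
    have hint := Lagrange.eq_interpolate_of_eval_eq (r := fun i => x i ^ d) (v := x)
      (s := Finset.univ) hinj.injOn hdeg (fun i _ => hev i)
    have h := Lagrange.eval_interpolate_not_at_node (s := Finset.univ) (v := x) (x := -t)
      (fun i => x i ^ d) (fun i _ => by have := hx i; linarith)
    rw [← hint, hP] at h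
    simp only [Polynomial.eval_sub, Polynomial.eval_pow, Polynomial.eval_X, Lagrange.eval_nodal,
      Lagrange.nodalWeight] at h
    have hpos : 0 < ∏ i, (x i + t) := Finset.prod_pos fun i _ => by have := hx i; linarith
    have e1 : ∏ i, (-t - x i) = (-1)^d * ∏ i, (x i + t) := by
      rw [show (-1:ℝ)^d = ∏ i : Fin d, (-1:ℝ) by simp, ← Finset.prod_mul_distrib]
      exact Finset.prod_congr rfl fun i _ => by ring
    have e2 : ∑ i, (∏ j ∈ Finset.univ.erase i, (x i - x j)⁻¹) * (-t - x i)⁻¹ * x i ^ d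
        = -∑ i, (x i ^ d / ∏ j ∈ Finset.univ.erase i, (x i - x j)) / (x i + t) := by
      rw [← Finset.sum_neg_distrib]
      refine Finset.sum_congr rfl fun i _ => ?_
      rw [Finset.prod_inv_distrib, show -t - x i = -(x i + t) by ring, inv_neg]
      ring
    rw [e1, e2, neg_pow t] at h
    have h3 : t ^ d - ∏ i, (x i + t) = (∏ i, (x i + t)) *
        -∑ i, (x i ^ d / ∏ j ∈ Finset.univ.erase i, (x i - x j)) / (x i + t) := by
      have : ((-1:ℝ)^d) ≠ 0 := by simp
      apply mul_left_cancel₀ this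
      linarith
    rw [div_eq_iff hpos.ne']
    linarith

lemma key_id {d : ℕ} (x : Fin d → ℝ) (hd : 2 ≤ d)
    (hx : ∀ i, 0 < x i) (hinj : Function.Injective x) (e : ℕ → ℝ)
    (he : ∀ k, e k = ∑ t ∈ Finset.powersetCard k (Finset.univ : Finset (Fin d)),
      ∏ i ∈ t, x i) (t : ℝ) (ht : 0 ≤ t) :
    ∑ i, (x i - x i ^ d / ∏ j ∈ Finset.univ.erase i, (x i - x j)) / (x i + t)
      = ∑ k ∈ Finset.Icc 2 d, ((k:ℝ) - 1) * e k * (t ^ (d - k) / ∏ i, (x i + t)) := by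
  have hpos : ∀ i, 0 < x i + t := fun i => by have := hx i; linarith
  have hp : 0 < ∏ i, (x i + t) := Finset.prod_pos fun i _ => hpos i
  have h1 := (partial_frac x (by omega) hx hinj).2 t ht
  have h2 := expand_deriv x e he t
  have h3 := expand x e he t 1
  simp only [one_mul, one_pow, mul_one] at h3
  have h4 : ∑ i, x i / (x i + t) =
      (∑ k ∈ Finset.range (d+1), k * e k * t ^ (d - k)) / ∏ i, (x i + t) := by
    rw [← h2, Finset.sum_div]
    refine Finset.sum_congr rfl fun i _ => ?_
    rw [← Finset.mul_prod_erase Finset.univ _ (Finset.mem_univ i)]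
    have : ∏ j ∈ Finset.univ.erase i, (x j + t) ≠ 0 :=
      Finset.prod_ne_zero_iff.2 fun j _ => (hpos j).ne'
    have := (hpos i).ne'
    field_simp
  have h5 : ∑ k ∈ Finset.range (d+1), ((k:ℝ) - 1) * e k * t ^ (d - k) =
      - t ^ d + ∑ k ∈ Finset.Icc 2 d, ((k:ℝ) - 1) * e k * t ^ (d - k) := by
    have he0 : e 0 = 1 := by simp [he]
    rw [Finset.range_eq_Ico, Finset.sum_eq_sum_Ico_succ_bot (by omega),
      Finset.sum_eq_sum_Ico_succ_bot (by omega)]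
    simp only [he0]
    have : Finset.Ico (0 + 1 + 1) (d + 1) = Finset.Icc 2 d := by
      ext k; simp
    rw [this]
    simp
  have h6 : ∑ k ∈ Finset.range (d+1), ((k:ℝ) - 1) * e k * t ^ (d - k) =
     ∑ k ∈ Finset.range (d+1), (k:ℝ) * e k * t ^ (d - k) - ∏ i, (x i + t) := by
    rw [h3, ← Finset.sum_sub_distrib]
    exact Finset.sum_congr rfl fun k _ => by ring
  simp_rw [sub_div, Finset.sum_sub_distrib, mul_div_assoc']
  rw [← Finset.sum_div, h4]
  have h7 : ∑ i, (x i ^ d / ∏ j ∈ Finset.univ.erase i, (x i - x j)) / (x i + t) =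
      1 - t ^ d / ∏ i, (x i + t) := by linarith
  rw [h7, eq_div_iff hp.ne', sub_mul, sub_mul, div_mul_cancel₀ _ hp.ne', div_mul_cancel₀ _ hp.ne']
  linarith

lemma beta_deriv (d k : ℕ) (hk : 2 ≤ k) (hkd : k ≤ d) (a t : ℝ) (ha : 0 < a) (ht : 0 ≤ t) :
    HasDerivAt (fun t : ℝ => ∫ s in (0:ℝ)..(t / (t + a)), s ^ (d - k) * (1 - s) ^ (k - 2))
      (a ^ (k - 1) * (t ^ (d - k) / (t + a) ^ d)) t := by
  have hta : t + a ≠ 0 := by positivity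
  have hc : Continuous fun s : ℝ => s ^ (d - k) * (1 - s) ^ (k - 2) := by fun_prop
  have h1 := hc.integral_hasStrictDerivAt 0 (t / (t + a)) |>.hasDerivAt
  have h2 : HasDerivAt (fun t : ℝ => t / (t + a)) _ t :=
    (hasDerivAt_id t).div ((hasDerivAt_id t).add_const a) hta
  refine (h1.comp t h2).congr_deriv ?_
  obtain ⟨n, rfl⟩ := Nat.exists_eq_add_of_le hk
  obtain ⟨m, rfl⟩ := Nat.exists_eq_add_of_le hkd
  have e1 : 1 - t / (t + a) = a / (t + a) := by field_simp; ring
  rw [e1]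
  have e2 : 2 + n + m - (2 + n) = m := by omega
  have e3 : 2 + n - 2 = n := by omega
  have e4 : 2 + n - 1 = n + 1 := by omega
  rw [e2, e3, e4]
  simp only [id, div_pow]
  field_simp
  ring

lemma log_tendsto {d : ℕ} (x c : Fin d → ℝ) (hx : ∀ i, 0 < x i) (hc : ∑ i, c i = 0) :
    Filter.Tendsto (fun t : ℝ => ∑ i, c i * Real.log (x i + t)) Filter.atTop (nhds 0) := by
  have h : Filter.Tendsto (fun t : ℝ => ∑ i, c i * (Real.log (t + x i) - Real.log t))
      Filter.atTop (nhds (∑ i, c i * 0)) :=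
    tendsto_finsetSum _ fun i _ => (Real.tendsto_log_comp_add_sub_log (x i)).const_mul (c i)
  simp only [mul_zero, Finset.sum_const_zero] at h
  refine h.congr fun t => ?_
  simp_rw [mul_sub, Finset.sum_sub_distrib, ← Finset.sum_mul, hc, add_comm]
  simp

theorem entropy_sub_subentropy_lower_bound (d : ℕ) (hd : 2 ≤ d) (x : Fin d → ℝ)
    (hx : ∀ i, 0 < x i) (hdist : ∀ i j, i ≠ j → x i ≠ x j)
    (e : ℕ → ℝ)
    (he : ∀ k, e k = ∑ t ∈ Finset.powersetCard k (Finset.univ : Finset (Fin d)),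
      ∏ i ∈ t, x i) :
    ∑ k ∈ Finset.Icc 2 d, (d : ℝ) ^ (k - 1) * e k / (((d - 1).choose (k - 1) : ℝ) * e 1 ^ (k - 1))
      ≤ (-∑ i, x i * Real.log (x i))
        - (-∑ i, (x i ^ d / ∏ j ∈ Finset.univ.erase i, (x i - x j)) * Real.log (x i)) := by
  have hinj : Function.Injective x := fun i j h => by
    by_contra hne; exact hdist i j hne h
  have hsum := (partial_frac x (by omega) hx hinj).1
  have hkey := key_id x hd hx hinj e he
  set w : Fin d → ℝ := fun i => x i ^ d / ∏ j ∈ Finset.univ.erase i, (x i - x j) with hw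
  have hc : ∑ i, (x i - w i) = 0 := by
    rw [Finset.sum_sub_distrib]; simp only [hw]; linarith
  have he1 : e 1 = ∑ i, x i := by
    rw [he, Finset.powersetCard_one]; simp
  have hd0 : (0:ℝ) < d := by positivity
  have he1pos : 0 < e 1 := by
    rw [he1]; exact Finset.sum_pos (fun i _ => hx i) ⟨⟨0, by omega⟩, Finset.mem_univ _⟩
  have hek : ∀ k, 0 ≤ e k := fun k => by
    rw [he]; exact Finset.sum_nonneg fun u _ => Finset.prod_nonneg fun i _ => (hx i).le
  set a : ℝ := e 1 / d with ha
  have hapos : 0 < a := by positivity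
  have hamgm : ∀ t : ℝ, 0 ≤ t → ∏ i, (x i + t) ≤ (t + a) ^ d := fun t ht => by
    have := prod_le_amgm (by omega) (fun i => x i + t) (fun i => by have := hx i; linarith)
    convert this using 2
    rw [Finset.sum_add_distrib, ← he1, ha]
    simp
    field_simp
    ring
  let B : ℕ → ℝ → ℝ := fun k u => ∫ s in (0:ℝ)..u, s ^ (d - k) * (1 - s) ^ (k - 2)
  let Φ : ℝ → ℝ := fun t => ∑ i, (x i - w i) * Real.log (x i + t)
    - ∑ k ∈ Finset.Icc 2 d, ((k:ℝ) - 1) * e k / a ^ (k - 1) * B k (t / (t + a))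
  have hder : ∀ t : ℝ, 0 ≤ t → HasDerivAt Φ (∑ i, (x i - w i) / (x i + t)
      - ∑ k ∈ Finset.Icc 2 d, ((k:ℝ) - 1) * e k * (t ^ (d - k) / (t + a) ^ d)) t := by
    intro t ht
    refine HasDerivAt.sub (HasDerivAt.fun_sum fun i _ => ?_) (HasDerivAt.fun_sum fun k hk => ?_)
    · have hne : x i + t ≠ 0 := by have := hx i; positivity
      refine ((((hasDerivAt_id t).const_add (x i)).log hne).const_mul (x i - w i)).congr_deriv ?_
      simp [div_eq_mul_inv]
    · rw [Finset.mem_Icc] at hk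
      refine ((beta_deriv d k hk.1 hk.2 a t hapos ht).const_mul _).congr_deriv ?_
      have : a ^ (k-1) ≠ 0 := by positivity
      field_simp
  have hmono : MonotoneOn Φ (Set.Ici 0) := by
    refine monotoneOn_of_hasDerivWithinAt_nonneg (convex_Ici 0)
      (fun t ht => (hder t ht).continuousAt.continuousWithinAt)
      (fun t ht => (hder t (interior_subset ht)).hasDerivWithinAt) ?_
    intro t ht
    have ht : 0 ≤ t := interior_subset ht
    rw [hkey t ht, sub_nonneg]
    refine Finset.sum_le_sum fun k hk => ?_
    rw [Finset.mem_Icc] at hk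
    have hk1 : (2:ℝ) ≤ k := by exact_mod_cast hk.1
    have hp : 0 < ∏ i, (x i + t) := Finset.prod_pos fun i _ => by have := hx i; linarith
    refine mul_le_mul_of_nonneg_left ?_ (mul_nonneg (by linarith) (hek k))
    exact div_le_div_of_nonneg_left (by positivity) hp (hamgm t ht)
  have hlim : Filter.Tendsto Φ Filter.atTop (nhds (0 -
      ∑ k ∈ Finset.Icc 2 d, ((k:ℝ) - 1) * e k / a ^ (k - 1) * B k 1)) := by
    refine (log_tendsto x _ hx hc).sub (tendsto_finsetSum _ fun k _ => ?_)
    refine Filter.Tendsto.const_mul _ ?_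
    have hcont : Continuous (B k) :=
      intervalIntegral.continuous_primitive
        (fun p q => Continuous.intervalIntegrable (by fun_prop) p q) 0
    have hu : Filter.Tendsto (fun t : ℝ => t / (t + a)) Filter.atTop (nhds 1) := by
      have h1 : Filter.Tendsto (fun t : ℝ => 1 - a / (t + a)) Filter.atTop (nhds (1 - 0)) :=
        tendsto_const_nhds.sub
          (Filter.Tendsto.div_atTop tendsto_const_nhds
            (Filter.tendsto_atTop_add_const_right _ _ Filter.tendsto_id))
      rw [sub_zero] at h1
      refine h1.congr' ?_
      filter_upwards [Filter.eventually_gt_atTop 0] with t ht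
      have : t + a ≠ 0 := by positivity
      field_simp
      ring
    exact (hcont.tendsto 1).comp hu
  have hle : Φ 0 ≤ _ := ge_of_tendsto hlim (by
    filter_upwards [Filter.eventually_ge_atTop 0] with t ht
    exact hmono (Set.mem_Ici.2 le_rfl) ht ht)
  have hΦ0 : Φ 0 = ∑ i, (x i - w i) * Real.log (x i) := by
    simp [Φ, B]
  have hB : ∀ k ∈ Finset.Icc 2 d, ((k:ℝ) - 1) * e k / a ^ (k - 1) * B k 1 =
      (d : ℝ) ^ (k - 1) * e k / (((d - 1).choose (k - 1) : ℝ) * e 1 ^ (k - 1)) := by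
    intro k hk
    rw [Finset.mem_Icc] at hk
    obtain ⟨hk2, hkd⟩ := hk
    simp only [B, beta_int, ha, div_pow]
    obtain ⟨n, rfl⟩ := Nat.exists_eq_add_of_le hk2
    obtain ⟨m, hm⟩ := Nat.exists_eq_add_of_le hkd
    have e2 : d - (2 + n) = m := by omega
    have e3 : 2 + n - 2 = n := by omega
    have e4 : 2 + n - 1 = n + 1 := by omega
    have e5 : d - 1 = n + 1 + m := by omega
    rw [e2, e3, e4, e5, Nat.cast_add_choose, Nat.factorial_succ n,
      show m + n + 1 = n + 1 + m by ring]
    push_cast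
    have : ((n:ℝ)+1) ≠ 0 := by positivity
    field_simp
    ring
  rw [Finset.sum_congr rfl hB, hΦ0] at hle
  simp_rw [sub_mul, Finset.sum_sub_distrib] at hle
  simp only [hw] at hle ⊢
  linarith
end

section
/- Let d ≥ 2 be an integer and let e₁,…,e_d be positive reals, with q_e(τ) = τ^d + Σ_{k=1}^d e_k τ^{d−k}. Let F(e₁,…,e_d) = ∫₀^∞ [ d − τ·q_e′(τ)/q_e(τ) − e₁/(τ+1) ] dτ and G(e₁,…,e_d) = ∫₀^∞ [ 1 − τ^d/q_e(τ) − e₁/(τ+1) ] dτ (entropy and subentropy as functions of the elementary symmetric polynomials). Then for any integers l, m ≥ 1 with k := l + m ≤ d: (i) the partial derivative of G with respect to e_k at (e₁,…,e_d) equals ∫₀^∞ τ^{2d−k}/q_e(τ)² dτ; (ii) the second mixed partial derivative of F with respect to e_l and e_m at (e₁,…,e_d) equals −∫₀^∞ τ^{2d−l−m}/q_e(τ)² dτ; consequently −∂G/∂e_k = ∂²F/∂e_l∂e_m whenever k = l + m. -/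
open MeasureTheory Real

/-- The polynomial `q_e(τ) = τ^d + Σ_{k=1}^d e_k τ^{d−k}`, where the coordinate
`i : Fin d` of `e` stores the elementary symmetric polynomial `e_{i+1}`. -/
noncomputable def qe (d : ℕ) (e : Fin d → ℝ) (τ : ℝ) : ℝ :=
  τ ^ d + ∑ i, e i * τ ^ (d - 1 - (i : ℕ))

/-- The entropy `H` as a function of the elementary symmetric polynomials:
`F(e) = ∫₀^∞ [ d − τ q_e'(τ)/q_e(τ) − e₁/(τ+1) ] dτ`. -/
noncomputable def entF (d : ℕ) (hd : 2 ≤ d) (e : Fin d → ℝ) : ℝ :=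
  ∫ τ in Set.Ioi (0 : ℝ),
    ((d : ℝ) - τ * deriv (qe d e) τ / qe d e τ - e ⟨0, by omega⟩ / (τ + 1))

/-- The subentropy `Q` as a function of the elementary symmetric polynomials:
`G(e) = ∫₀^∞ [ 1 − τ^d/q_e(τ) − e₁/(τ+1) ] dτ`. -/
noncomputable def subQ (d : ℕ) (hd : 2 ≤ d) (e : Fin d → ℝ) : ℝ :=
  ∫ τ in Set.Ioi (0 : ℝ),
    (1 - τ ^ d / qe d e τ - e ⟨0, by omega⟩ / (τ + 1))


open Filter Topology

/-- growth class: `|h e τ| ≤ K (τ+1)^n` locally uniformly in positive `e`. -/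
def BB (d : ℕ) (h : (Fin d → ℝ) → ℝ → ℝ) (n : ℤ) : Prop :=
  ∀ c C : ℝ, 0 < c → ∃ K : ℝ, 0 ≤ K ∧ ∀ e : Fin d → ℝ, (∀ i, c ≤ e i ∧ e i ≤ C) →
    ∀ τ : ℝ, 0 < τ → |h e τ| ≤ K * (τ + 1) ^ n

lemma BB.mono {d : ℕ} {h : (Fin d → ℝ) → ℝ → ℝ} {n n' : ℤ} (H : BB d h n) (hn : n ≤ n') :
    BB d h n' := by
  intro c C hc
  obtain ⟨K, hK, H⟩ := H c C hc
  refine ⟨K, hK, fun e he τ hτ => (H e he τ hτ).trans ?_⟩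
  exact mul_le_mul_of_nonneg_left (zpow_le_zpow_right₀ (by linarith) hn) hK

lemma BB.mul {d : ℕ} {h g : (Fin d → ℝ) → ℝ → ℝ} {n n' : ℤ} (H : BB d h n) (G : BB d g n') :
    BB d (fun e τ => h e τ * g e τ) (n + n') := by
  intro c C hc
  obtain ⟨K, hK, H⟩ := H c C hc
  obtain ⟨L, hL, G⟩ := G c C hc
  refine ⟨K * L, by positivity, fun e he τ hτ => ?_⟩
  rw [abs_mul, zpow_add₀ (by positivity)]
  calc _ ≤ (K * (τ + 1) ^ n) * (L * (τ + 1) ^ n') :=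
        mul_le_mul (H e he τ hτ) (G e he τ hτ) (abs_nonneg _) (by positivity)
    _ = _ := by ring

lemma BB.add {d : ℕ} {h g : (Fin d → ℝ) → ℝ → ℝ} {n : ℤ} (H : BB d h n) (G : BB d g n) :
    BB d (fun e τ => h e τ + g e τ) n := by
  intro c C hc
  obtain ⟨K, hK, H⟩ := H c C hc
  obtain ⟨L, hL, G⟩ := G c C hc
  refine ⟨K + L, by positivity, fun e he τ hτ => ?_⟩
  have := H e he τ hτ
  have := G e he τ hτ
  have := abs_add_le (h e τ) (g e τ)
  linarith

lemma BB.neg {d : ℕ} {h : (Fin d → ℝ) → ℝ → ℝ} {n : ℤ} (H : BB d h n) :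
    BB d (fun e τ => - h e τ) n := by
  intro c C hc
  obtain ⟨K, hK, H⟩ := H c C hc
  exact ⟨K, hK, fun e he τ hτ => by rw [abs_neg]; exact H e he τ hτ⟩

lemma BB.sub {d : ℕ} {h g : (Fin d → ℝ) → ℝ → ℝ} {n : ℤ} (H : BB d h n) (G : BB d g n) :
    BB d (fun e τ => h e τ - g e τ) n := by
  simpa only [sub_eq_add_neg] using H.add G.neg

lemma BB.const (d : ℕ) (x : ℝ) : BB d (fun _ _ => x) 0 := by
  intro c C hc
  exact ⟨|x|, abs_nonneg _, fun e he τ hτ => by simp⟩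

lemma BB.sum {d : ℕ} {ι : Type} (s : Finset ι) {h : ι → (Fin d → ℝ) → ℝ → ℝ} {n : ℤ}
    (H : ∀ i, BB d (h i) n) : BB d (fun e τ => ∑ i ∈ s, h i e τ) n := by
  classical
  induction s using Finset.induction_on with
  | empty => 
    intro c C hc
    exact ⟨0, le_rfl, fun e he τ hτ => by simp⟩
  | insert a s ha ih =>
    simp only [Finset.sum_insert ha]
    exact (H a).add ih

lemma BB.coord {d : ℕ} (i : Fin d) : BB d (fun e _ => e i) 0 := by
  intro c C hc
  refine ⟨|C|, abs_nonneg _, fun e he τ hτ => ?_⟩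
  have := he i
  rw [zpow_zero, mul_one]
  exact abs_le_abs_of_nonneg (by linarith) this.2

lemma BB.taupow (d k : ℕ) : BB d (fun _ τ => τ ^ k) k := by
  intro c C hc
  refine ⟨1, zero_le_one, fun e he τ hτ => ?_⟩
  rw [abs_of_pos (by positivity), one_mul, zpow_natCast]
  exact pow_le_pow_left₀ hτ.le (by linarith) k

lemma BB.inv1 (d : ℕ) : BB d (fun _ τ => 1 / (τ + 1)) (-1) := by
  intro c C hc
  refine ⟨1, zero_le_one, fun e he τ hτ => ?_⟩
  rw [abs_of_pos (by positivity)]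
  simp

lemma qe_lower {d : ℕ} (hd : 2 ≤ d) {e : Fin d → ℝ} {c : ℝ} (hc : 0 < c) (he : ∀ i, c ≤ e i)
    {τ : ℝ} (hτ : 0 ≤ τ) : τ ^ d + c ≤ qe d e τ := by
  unfold qe
  have := Finset.single_le_sum (f := fun i : Fin d => e i * τ ^ (d - 1 - (i : ℕ)))
    (fun i _ => mul_nonneg (hc.le.trans (he i)) (pow_nonneg hτ _))
    (Finset.mem_univ (⟨d - 1, by omega⟩ : Fin d))
  simp at this
  have := he ⟨d - 1, by omega⟩
  linarith

lemma exists_low {d : ℕ} (hd : 2 ≤ d) {e : Fin d → ℝ} (he : ∀ i, 0 < e i) :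
    ∃ c, 0 < c ∧ ∀ i, c ≤ e i := by
  have : Nonempty (Fin d) := ⟨⟨0, by omega⟩⟩
  obtain ⟨i, hi⟩ := Finite.exists_min e
  exact ⟨e i, he i, hi⟩

lemma exists_up {d : ℕ} (hd : 2 ≤ d) (e : Fin d → ℝ) :
    ∃ C, ∀ i, e i ≤ C := by
  have : Nonempty (Fin d) := ⟨⟨0, by omega⟩⟩
  obtain ⟨i, hi⟩ := Finite.exists_max e
  exact ⟨e i, hi⟩

lemma qe_pos {d : ℕ} (hd : 2 ≤ d) {e : Fin d → ℝ} (he : ∀ i, 0 < e i)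
    {τ : ℝ} (hτ : 0 ≤ τ) : 0 < qe d e τ := by
  obtain ⟨c, hc, h⟩ := exists_low hd he
  have := qe_lower hd hc h hτ
  have : 0 ≤ τ ^ d := by positivity
  linarith

lemma BB.invq {d : ℕ} (hd : 2 ≤ d) : BB d (fun e τ => 1 / qe d e τ) (-d) := by
  intro c C hc
  refine ⟨2 ^ (d - 1) / min 1 c, by positivity, fun e he τ hτ => ?_⟩
  have h1 := qe_lower hd hc (fun i => (he i).1) hτ.le
  have h2 : 0 < qe d e τ := by have : 0 < τ ^ d := by positivity
                               linarith
  rw [abs_of_pos (by positivity), zpow_neg, zpow_natCast, ← div_eq_mul_inv, div_div,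
    div_le_div_iff₀ h2 (by positivity), one_mul]
  have h3 : (τ + 1) ^ d ≤ 2 ^ (d - 1) * (τ ^ d + 1 ^ d) := add_pow_le hτ.le zero_le_one d
  have h4 : min 1 c * (τ ^ d + 1) ≤ τ ^ d + c := by
    have := min_le_left 1 c
    have := min_le_right 1 c
    have : 0 < τ ^ d := by positivity
    nlinarith
  calc min 1 c * (τ + 1) ^ d ≤ min 1 c * (2 ^ (d - 1) * (τ ^ d + 1 ^ d)) := by gcongr
    _ = 2 ^ (d - 1) * (min 1 c * (τ ^ d + 1)) := by ring
    _ ≤ _ := by gcongr; linarith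

lemma int_bound (K : ℝ) : IntegrableOn (fun τ : ℝ => K * (τ + 1) ^ (-2 : ℤ)) (Set.Ioi 0) := by
  have := integrableOn_add_rpow_Ioi_of_lt (a := -2) (c := 0) (m := 1) (by norm_num) (by norm_num)
  refine Integrable.const_mul ?_ K
  refine this.congr_fun (fun x hx => ?_) measurableSet_Ioi
  have : ((-2 : ℝ)) = ((-2 : ℤ) : ℝ) := by norm_num
  simp only [this, Real.rpow_intCast]

lemma BB.integrable {d : ℕ} (hd : 2 ≤ d) {h : (Fin d → ℝ) → ℝ → ℝ} (H : BB d h (-2))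
    {e : Fin d → ℝ} (he : ∀ i, 0 < e i) (hc : ContinuousOn (h e) (Set.Ioi 0)) :
    IntegrableOn (h e) (Set.Ioi 0) := by
  obtain ⟨c, hc0, hce⟩ := exists_low hd he
  obtain ⟨C, hC⟩ := exists_up hd e
  obtain ⟨K, hK, H⟩ := H c C hc0
  refine Integrable.mono' (int_bound K) (hc.aestronglyMeasurable measurableSet_Ioi) ?_
  filter_upwards [ae_restrict_mem measurableSet_Ioi] with τ hτ
  exact H e (fun i => ⟨hce i, hC i⟩) τ hτ

lemma pos_nhds {d : ℕ} (hd : 2 ≤ d) {e : Fin d → ℝ} (he : ∀ i, 0 < e i) :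
    ∃ c C : ℝ, 0 < c ∧ ∀ᶠ e' in 𝓝 e, ∀ i, c ≤ e' i ∧ e' i ≤ C := by
  obtain ⟨c, hc0, hce⟩ := exists_low hd he
  obtain ⟨C, hC⟩ := exists_up hd e
  refine ⟨c / 2, C + 1, by positivity, ?_⟩
  rw [eventually_all]
  intro i
  have hcont : ContinuousAt (fun e' : Fin d → ℝ => e' i) e := (continuous_apply i).continuousAt
  exact (hcont.eventually_const_le (by linarith [hce i])).and
    (hcont.eventually_le_const (by linarith [hC i]))

/-- The functional with coordinates `v`. -/
noncomputable def fun_of {d : ℕ} (v : Fin d → ℝ) : (Fin d → ℝ) →L[ℝ] ℝ :=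
  ∑ j, v j • ContinuousLinearMap.proj j

lemma fun_of_single {d : ℕ} (v : Fin d → ℝ) (j : Fin d) : fun_of v (Pi.single j 1) = v j := by
  simp [fun_of, Pi.single_apply]

lemma norm_fun_of {d : ℕ} (v : Fin d → ℝ) : ‖fun_of v‖ ≤ ∑ j, |v j| := by
  refine ContinuousLinearMap.opNorm_le_bound _ (by positivity) fun x => ?_
  simp only [fun_of, _root_.sum_apply, _root_.smul_apply,
    ContinuousLinearMap.proj_apply, smul_eq_mul, Finset.sum_mul]
  refine (norm_sum_le _ _).trans (Finset.sum_le_sum fun i _ => ?_)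
  rw [norm_mul]
  exact mul_le_mul_of_nonneg_left (norm_le_pi_norm x i) (norm_nonneg _)

lemma diff_int {d : ℕ} (hd : 2 ≤ d) (f : (Fin d → ℝ) → ℝ → ℝ)
    (D : Fin d → (Fin d → ℝ) → ℝ → ℝ)
    (hf : BB d f (-2)) (hD : ∀ j, BB d (D j) (-2))
    (cf : ∀ e, (∀ i, 0 < e i) → ContinuousOn (f e) (Set.Ioi 0))
    (cD : ∀ j e, (∀ i, 0 < e i) → ContinuousOn (D j e) (Set.Ioi 0))
    (hder : ∀ e, (∀ i, 0 < e i) → ∀ τ, 0 < τ →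
      HasFDerivAt (fun e => f e τ) (fun_of fun j => D j e τ) e)
    (e : Fin d → ℝ) (he : ∀ i, 0 < e i) (j : Fin d) :
    fderiv ℝ (fun e => ∫ τ in Set.Ioi (0 : ℝ), f e τ) e (Pi.single j 1) =
      ∫ τ in Set.Ioi (0 : ℝ), D j e τ := by
  obtain ⟨c, C, hc, hs⟩ := pos_nhds hd he
  have hsum : BB d (fun e τ => ∑ j, |D j e τ|) (-2) := by
    refine BB.sum _ fun j => ?_
    intro c C hc
    obtain ⟨K, hK, H⟩ := hD j c C hc
    exact ⟨K, hK, fun e he τ hτ => by rw [abs_abs]; exact H e he τ hτ⟩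
  obtain ⟨K, hK, H⟩ := hsum c C hc
  have hmem := hs.self_of_nhds
  have cF' : ContinuousOn (fun τ => fun_of fun j => D j e τ) (Set.Ioi 0) := by
    unfold fun_of
    exact continuousOn_finsetSum _ fun j _ => (cD j e he).smul continuousOn_const
  have key := hasFDerivAt_integral_of_dominated_of_fderiv_le (𝕜 := ℝ)
    (μ := volume.restrict (Set.Ioi (0:ℝ))) (F := f) (x₀ := e)
    (F' := fun e τ => fun_of fun j => D j e τ)
    (bound := fun τ : ℝ => K * (τ + 1) ^ (-2 : ℤ)) hs
    (by
      filter_upwards [hs] with e' he'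
      exact (cf e' fun i => hc.trans_le (he' i).1).aestronglyMeasurable measurableSet_Ioi)
    (hf.integrable hd he (cf e he))
    (cF'.aestronglyMeasurable measurableSet_Ioi)
    (by
      filter_upwards [ae_restrict_mem measurableSet_Ioi] with τ hτ e' he'
      exact (norm_fun_of _).trans ((le_abs_self _).trans (H e' he' τ hτ)))
    (int_bound K)
    (by
      filter_upwards [ae_restrict_mem measurableSet_Ioi] with τ hτ e' he'
      exact hder e' (fun i => hc.trans_le (he' i).1) τ hτ)
  rw [key.fderiv, ContinuousLinearMap.integral_apply]
  · simp only [fun_of_single]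
  · refine Integrable.mono' (int_bound K) (cF'.aestronglyMeasurable measurableSet_Ioi) ?_
    filter_upwards [ae_restrict_mem measurableSet_Ioi] with τ hτ
    exact (norm_fun_of _).trans ((le_abs_self _).trans (H e hmem τ hτ))

lemma eq_fun_of {d : ℕ} (L : (Fin d → ℝ) →L[ℝ] ℝ) (v : Fin d → ℝ)
    (h : ∀ j, L (Pi.single j 1) = v j) : L = fun_of v := by
  apply ContinuousLinearMap.coe_injective
  apply LinearMap.pi_ext'
  intro j
  ext
  simp [fun_of_single, h]

noncomputable def aa (d : ℕ) (i : Fin d) (e : Fin d → ℝ) (τ : ℝ) : ℝ :=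
  τ ^ (d - 1 - (i : ℕ)) * (1 / qe d e τ)

noncomputable def SS (d : ℕ) (w : Fin d → ℝ) (e : Fin d → ℝ) (τ : ℝ) : ℝ :=
  ∑ i, w i * e i * aa d i e τ

noncomputable def dl (d : ℕ) (j : Fin d) (τ : ℝ) : ℝ :=
  if (j : ℕ) = 0 then 1 / (τ + 1) else 0

noncomputable def Phi (d : ℕ) (w : Fin d → ℝ) (e : Fin d → ℝ) (τ : ℝ) : ℝ :=
  SS d w e τ - ∑ i, e i * dl d i τ

noncomputable def Phi1 (d : ℕ) (w : Fin d → ℝ) (j : Fin d) (e : Fin d → ℝ) (τ : ℝ) : ℝ :=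
  w j * aa d j e τ - SS d w e τ * aa d j e τ - dl d j τ

noncomputable def Phi2 (d : ℕ) (w : Fin d → ℝ) (j m : Fin d) (e : Fin d → ℝ) (τ : ℝ) : ℝ :=
  aa d j e τ * aa d m e τ * (2 * SS d w e τ - w j - w m)

lemma qe_cont (d : ℕ) (e : Fin d → ℝ) : Continuous (qe d e) := by
  unfold qe; fun_prop

lemma sum_aa {d : ℕ} (hd : 2 ≤ d) {e : Fin d → ℝ} (he : ∀ i, 0 < e i) {τ : ℝ} (hτ : 0 < τ) :
    ∑ i, e i * aa d i e τ = 1 - τ ^ d / qe d e τ := by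
  have hq := (qe_pos hd he hτ.le).ne'
  have : ∑ i, e i * aa d i e τ = (qe d e τ - τ ^ d) / qe d e τ := by
    unfold aa
    conv_rhs => rw [show qe d e τ - τ ^ d = ∑ i, e i * τ ^ (d - 1 - (i : ℕ)) by simp [qe]]
    rw [Finset.sum_div]
    exact Finset.sum_congr rfl fun i _ => by ring
  rw [this]; field_simp

lemma BB.aa {d : ℕ} (hd : 2 ≤ d) (i : Fin d) : BB d (aa d i) (-1 - (i : ℕ)) := by
  have := (BB.taupow d (d - 1 - (i : ℕ))).mul (BB.invq hd)
  exact this.mono (by have := i.2; omega)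

lemma BB.SS {d : ℕ} (hd : 2 ≤ d) (w : Fin d → ℝ) : BB d (SS d w) (-1) := by
  refine BB.sum _ fun i => ?_
  exact (((BB.const d (w i)).mul (BB.coord i)).mul (BB.aa hd i)).mono (by omega)

/-- congruence on positive points -/
lemma BB.congr {d : ℕ} {h g : (Fin d → ℝ) → ℝ → ℝ} {n : ℤ} (H : BB d h n)
    (hg : ∀ e : Fin d → ℝ, (∀ i, 0 < e i) → ∀ τ : ℝ, 0 < τ → g e τ = h e τ) : BB d g n := by
  intro c C hc
  obtain ⟨K, hK, H⟩ := H c C hc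
  exact ⟨K, hK, fun e he τ hτ => by
    rw [hg e (fun i => hc.trans_le (he i).1) τ hτ]; exact H e he τ hτ⟩

lemma BB.aadl {d : ℕ} (hd : 2 ≤ d) {w : Fin d → ℝ} (hw : w ⟨0, by omega⟩ = 1) (j : Fin d) :
    BB d (fun e τ => w j * _root_.aa d j e τ - dl d j τ) (-2) := by
  by_cases hj : (j : ℕ) = 0
  · have hj0 : j = ⟨0, by omega⟩ := Fin.ext hj
    rw [hj0]
    have H := ((BB.aa hd ⟨0, by omega⟩).mono (n' := -1) (by simp)).sub (BB.SS hd (fun _ => 1))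
    refine (H.mul (BB.inv1 d)).congr ?_
    intro e he τ hτ
    have h1 := sum_aa hd he hτ
    have hq := (qe_pos hd he hτ.le).ne'
    simp only [_root_.SS, one_mul, h1, hw]
    simp only [_root_.aa, dl, if_true, Nat.sub_zero]
    have h2 : τ ^ d = τ ^ (d - 1) * τ := by rw [← pow_succ]; congr 1; omega
    rw [h2]
    field_simp
    ring
  · simp only [dl, hj, if_false, sub_zero]
    exact ((BB.const d (w j)).mul (BB.aa hd j)).mono (by omega)

lemma BB.Phi {d : ℕ} (hd : 2 ≤ d) {w : Fin d → ℝ} (hw : w ⟨0, by omega⟩ = 1) :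
    BB d (Phi d w) (-2) := by
  have := BB.sum Finset.univ fun i => (BB.coord i).mul (BB.aadl hd hw i)
  refine (this.mono (by norm_num)).congr fun e he τ hτ => ?_
  simp only [_root_.Phi, _root_.SS, ← Finset.sum_sub_distrib]
  exact Finset.sum_congr rfl fun i _ => by ring

lemma BB.Phi1 {d : ℕ} (hd : 2 ≤ d) {w : Fin d → ℝ} (hw : w ⟨0, by omega⟩ = 1) (j : Fin d) :
    BB d (Phi1 d w j) (-2) := by
  have := (BB.aadl hd hw j).sub (((BB.SS hd w).mul (BB.aa hd j)).mono (n' := -2) (by omega))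
  refine this.congr fun e he τ hτ => ?_
  simp only [_root_.Phi1]; ring

lemma BB.Phi2 {d : ℕ} (hd : 2 ≤ d) (w : Fin d → ℝ) (j m : Fin d) :
    BB d (Phi2 d w j m) (-2) := by
  have H := (((BB.const d 2).mul ((BB.SS hd w).mono (n' := 0) (by omega))).sub
    (BB.const d (w j))).sub (BB.const d (w m))
  exact (((BB.aa hd j).mul (BB.aa hd m)).mul H).mono (by omega)

lemma cont_aa {d : ℕ} (hd : 2 ≤ d) (i : Fin d) {e : Fin d → ℝ} (he : ∀ i, 0 < e i) :
    ContinuousOn (aa d i e) (Set.Ici 0) := by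
  unfold aa
  exact (by fun_prop : Continuous fun τ : ℝ => τ ^ (d - 1 - (i : ℕ))).continuousOn.mul
    (continuousOn_const.div (qe_cont d e).continuousOn fun τ hτ => (qe_pos hd he hτ).ne')

lemma cont_SS {d : ℕ} (hd : 2 ≤ d) (w : Fin d → ℝ) {e : Fin d → ℝ} (he : ∀ i, 0 < e i) :
    ContinuousOn (SS d w e) (Set.Ici 0) :=
  continuousOn_finsetSum _ fun i _ => continuousOn_const.mul (cont_aa hd i he)

lemma cont_dl {d : ℕ} (i : Fin d) : ContinuousOn (dl d i) (Set.Ici 0) := by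
  unfold dl
  split_ifs
  · exact continuousOn_const.div (by fun_prop) fun τ (hτ : 0 ≤ τ) => by positivity
  · exact continuousOn_const

lemma cont_Phi {d : ℕ} (hd : 2 ≤ d) (w : Fin d → ℝ) {e : Fin d → ℝ} (he : ∀ i, 0 < e i) :
    ContinuousOn (Phi d w e) (Set.Ici 0) :=
  (cont_SS hd w he).sub (continuousOn_finsetSum _ fun i _ => continuousOn_const.mul (cont_dl i))

lemma cont_Phi1 {d : ℕ} (hd : 2 ≤ d) (w : Fin d → ℝ) (j : Fin d)
    {e : Fin d → ℝ} (he : ∀ i, 0 < e i) :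
    ContinuousOn (Phi1 d w j e) (Set.Ici 0) :=
  ((continuousOn_const.mul (cont_aa hd j he)).sub
    ((cont_SS hd w he).mul (cont_aa hd j he))).sub (cont_dl j)

lemma cont_Phi2 {d : ℕ} (hd : 2 ≤ d) (w : Fin d → ℝ) (j m : Fin d)
    {e : Fin d → ℝ} (he : ∀ i, 0 < e i) :
    ContinuousOn (Phi2 d w j m e) (Set.Ici 0) :=
  ((cont_aa hd j he).mul (cont_aa hd m he)).mul
    (((continuousOn_const.mul (cont_SS hd w he)).sub continuousOn_const).sub continuousOn_const)

lemma hd_coord {d : ℕ} (i : Fin d) (e : Fin d → ℝ) :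
    HasFDerivAt (fun e : Fin d → ℝ => e i) (fun_of (Pi.single i 1)) e := by
  have := (ContinuousLinearMap.proj (R := ℝ) (φ := fun _ : Fin d => ℝ) i).hasFDerivAt (x := e)
  rw [← eq_fun_of (ContinuousLinearMap.proj i) (Pi.single i (1:ℝ))]
  · exact this
  · intro j
    simp [Pi.single_apply, eq_comm]

lemma hd_qe {d : ℕ} (τ : ℝ) (e : Fin d → ℝ) :
    HasFDerivAt (fun e => qe d e τ) (fun_of fun j => τ ^ (d - 1 - (j : ℕ))) e := by
  have := (HasFDerivAt.fun_sum (u := Finset.univ) fun i _ =>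
    (hd_coord i e).mul_const (τ ^ (d - 1 - (i : ℕ)))).const_add (τ ^ d)
  refine this.congr_fderiv (eq_fun_of _ _ fun j => ?_)
  simp [fun_of_single, Pi.single_apply]

lemma hd_aa {d : ℕ} (hd : 2 ≤ d) (i : Fin d) {τ : ℝ} (hτ : 0 < τ) {e : Fin d → ℝ}
    (he : ∀ i, 0 < e i) :
    HasFDerivAt (fun e => aa d i e τ) (fun_of fun j => - (aa d i e τ * aa d j e τ)) e := by
  have hq := (qe_pos hd he hτ.le).ne'
  have h1 := (hasDerivAt_inv hq).comp_hasFDerivAt e (hd_qe τ e)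
  have := h1.const_mul (τ ^ (d - 1 - (i : ℕ)))
  have h2 : (fun e => aa d i e τ) =
      fun e => τ ^ (d - 1 - (i : ℕ)) * ((fun x : ℝ => x⁻¹) ∘ fun e => qe d e τ) e := by
    funext e; simp [aa]
  rw [h2]
  refine this.congr_fderiv (eq_fun_of _ _ fun j => ?_)
  simp [fun_of_single, aa]
  ring

lemma hd_SS {d : ℕ} (hd : 2 ≤ d) (w : Fin d → ℝ) {τ : ℝ} (hτ : 0 < τ) {e : Fin d → ℝ}
    (he : ∀ i, 0 < e i) :
    HasFDerivAt (fun e => SS d w e τ)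
      (fun_of fun j => w j * aa d j e τ - SS d w e τ * aa d j e τ) e := by
  have := HasFDerivAt.fun_sum (u := Finset.univ) fun i _ =>
    ((hd_coord i e).const_mul (w i)).mul (hd_aa hd i hτ he)
  refine this.congr_fderiv (eq_fun_of _ _ fun j => ?_)
  simp [fun_of_single, Pi.single_apply, SS, Finset.sum_add_distrib, Finset.sum_mul]
  rw [sub_eq_add_neg, add_comm, mul_comm (aa d j e τ) (w j)]
  congr 2
  exact Finset.sum_congr rfl fun i _ => by ring

lemma hd_Phi {d : ℕ} (hd : 2 ≤ d) (w : Fin d → ℝ) {τ : ℝ} (hτ : 0 < τ) {e : Fin d → ℝ}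
    (he : ∀ i, 0 < e i) :
    HasFDerivAt (fun e => Phi d w e τ) (fun_of fun j => Phi1 d w j e τ) e := by
  have := (hd_SS hd w hτ he).sub (HasFDerivAt.fun_sum (u := Finset.univ) fun i _ =>
    (hd_coord i e).mul_const (dl d i τ))
  refine this.congr_fderiv (eq_fun_of _ _ fun j => ?_)
  simp [fun_of_single, Pi.single_apply, Phi1]

lemma hd_Phi1 {d : ℕ} (hd : 2 ≤ d) (w : Fin d → ℝ) (j : Fin d) {τ : ℝ} (hτ : 0 < τ)
    {e : Fin d → ℝ} (he : ∀ i, 0 < e i) :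
    HasFDerivAt (fun e => Phi1 d w j e τ) (fun_of fun m => Phi2 d w j m e τ) e := by
  have := (((hd_aa hd j hτ he).const_mul (w j)).sub
    ((hd_SS hd w hτ he).mul (hd_aa hd j hτ he))).sub_const (dl d j τ)
  refine this.congr_fderiv (eq_fun_of _ _ fun m => ?_)
  simp [fun_of_single, Phi2]
  ring

lemma fd_Phi {d : ℕ} (hd : 2 ≤ d) {w : Fin d → ℝ} (hw : w ⟨0, by omega⟩ = 1)
    {e : Fin d → ℝ} (he : ∀ i, 0 < e i) (j : Fin d) :
    fderiv ℝ (fun e => ∫ τ in Set.Ioi (0 : ℝ), Phi d w e τ) e (Pi.single j 1) =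
      ∫ τ in Set.Ioi (0 : ℝ), Phi1 d w j e τ :=
  diff_int hd (Phi d w) (Phi1 d w) (BB.Phi hd hw) (BB.Phi1 hd hw)
    (fun e he => (cont_Phi hd w he).mono Set.Ioi_subset_Ici_self)
    (fun j e he => (cont_Phi1 hd w j he).mono Set.Ioi_subset_Ici_self)
    (fun e he τ hτ => hd_Phi hd w hτ he) e he j

lemma fd_Phi1 {d : ℕ} (hd : 2 ≤ d) {w : Fin d → ℝ} (hw : w ⟨0, by omega⟩ = 1)
    {e : Fin d → ℝ} (he : ∀ i, 0 < e i) (j m : Fin d) :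
    fderiv ℝ (fun e => ∫ τ in Set.Ioi (0 : ℝ), Phi1 d w j e τ) e (Pi.single m 1) =
      ∫ τ in Set.Ioi (0 : ℝ), Phi2 d w j m e τ :=
  diff_int hd (Phi1 d w j) (Phi2 d w j) (BB.Phi1 hd hw j) (BB.Phi2 hd w j)
    (fun e he => (cont_Phi1 hd w j he).mono Set.Ioi_subset_Ici_self)
    (fun m e he => (cont_Phi2 hd w j m he).mono Set.Ioi_subset_Ici_self)
    (fun e he τ hτ => hd_Phi1 hd w j hτ he) e he m

lemma pos_ev {d : ℕ} (hd : 2 ≤ d) {e : Fin d → ℝ} (he : ∀ i, 0 < e i) :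
    ∀ᶠ e' in 𝓝 e, ∀ i, 0 < e' i := by
  obtain ⟨c, C, hc, h⟩ := pos_nhds hd he
  filter_upwards [h] with e' h' i using hc.trans_le (h' i).1

lemma sum_dl {d : ℕ} (hd : 2 ≤ d) (e : Fin d → ℝ) (τ : ℝ) :
    ∑ i, e i * dl d i τ = e ⟨0, by omega⟩ / (τ + 1) := by
  rw [Finset.sum_eq_single (⟨0, by omega⟩ : Fin d)]
  · simp [dl]; rfl
  · intro b _ hb
    have : (b : ℕ) ≠ 0 := fun h => hb (Fin.ext h)
    simp [dl, this]
  · simp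

lemma hasDeriv_qe (d : ℕ) (e : Fin d → ℝ) (τ : ℝ) :
    HasDerivAt (qe d e) (d * τ ^ (d - 1) +
      ∑ i : Fin d, e i * (((d - 1 - (i : ℕ) : ℕ) : ℝ) * τ ^ (d - 1 - (i : ℕ) - 1))) τ := by
  unfold qe
  exact (hasDerivAt_pow d τ).add (HasDerivAt.fun_sum fun i _ => (hasDerivAt_pow _ τ).const_mul _)

lemma mul_pow_pred (n : ℕ) (τ : ℝ) : τ * ((n : ℝ) * τ ^ (n - 1)) = n * τ ^ n := by
  cases n with
  | zero => simp
  | succ n => simp [pow_succ]; ring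

/-- `τ q' = d q - q S` with weights `i + 1`. -/
lemma tau_deriv {d : ℕ} (hd : 2 ≤ d) {e : Fin d → ℝ} (he : ∀ i, 0 < e i) {τ : ℝ} (hτ : 0 < τ) :
    τ * deriv (qe d e) τ = qe d e τ * (d - SS d (fun i => (i : ℕ) + 1) e τ) := by
  have hq := (qe_pos hd he hτ.le).ne'
  have h1 : qe d e τ * SS d (fun i => (i : ℕ) + 1) e τ =
      ∑ i : Fin d, ((i : ℕ) + 1 : ℝ) * e i * τ ^ (d - 1 - (i : ℕ)) := by
    rw [SS, Finset.mul_sum]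
    refine Finset.sum_congr rfl fun i _ => ?_
    rw [aa]; field_simp
  rw [mul_sub, h1, (hasDeriv_qe d e τ).deriv, mul_add, mul_pow_pred, Finset.mul_sum, qe,
    add_mul, add_sub_assoc, Finset.sum_mul, ← Finset.sum_sub_distrib]
  congr 1
  · ring
  · refine Finset.sum_congr rfl fun i _ => ?_
    have := mul_pow_pred (d - 1 - (i : ℕ)) τ
    have h3 : ((d - 1 - (i : ℕ) : ℕ) : ℝ) = d - (i + 1) := by
      rw [Nat.sub_sub, Nat.cast_sub (by have := i.2; omega)]; push_cast; ring
    rw [show ∀ a b c : ℝ, a * (b * c) = b * (a * c) by intros; ring, this, h3]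
    ring

lemma subQ_eq {d : ℕ} (hd : 2 ≤ d) {e : Fin d → ℝ} (he : ∀ i, 0 < e i) :
    subQ d hd e = ∫ τ in Set.Ioi (0 : ℝ), Phi d (fun _ => 1) e τ := by
  refine setIntegral_congr_fun measurableSet_Ioi fun τ hτ => ?_
  simp only [Phi, SS, sum_dl hd, one_mul, sum_aa hd he hτ]

lemma entF_eq {d : ℕ} (hd : 2 ≤ d) {e : Fin d → ℝ} (he : ∀ i, 0 < e i) :
    entF d hd e = ∫ τ in Set.Ioi (0 : ℝ), Phi d (fun i => (i : ℕ) + 1) e τ := by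
  refine setIntegral_congr_fun measurableSet_Ioi fun τ hτ => ?_
  have hq := (qe_pos hd he (le_of_lt hτ)).ne'
  simp only [Phi, sum_dl hd, tau_deriv hd he hτ, mul_div_cancel_left₀ _ hq]
  ring

lemma aa_mul {d : ℕ} (e : Fin d → ℝ) (τ : ℝ) (l m : ℕ) (hl : 1 ≤ l) (hm : 1 ≤ m)
    (hlm : l + m ≤ d) (L M : Fin d) (hL : (L : ℕ) = l - 1) (hM : (M : ℕ) = m - 1) :
    aa d L e τ * aa d M e τ =
      τ ^ (2 * d - (l + m)) / (qe d e τ) ^ 2 := by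
  have : 2 * d - (l + m) = (d - 1 - (l - 1)) + (d - 1 - (m - 1)) := by omega
  rw [this, pow_add]; simp only [aa, hL, hM]; ring

lemma by_parts {d : ℕ} (hd : 2 ≤ d) {e : Fin d → ℝ} (he : ∀ i, 0 < e i)
    (l m : ℕ) (hl : 1 ≤ l) (hm : 1 ≤ m) (hlm : l + m ≤ d)
    (L M : Fin d) (hL : (L : ℕ) = l - 1) (hM : (M : ℕ) = m - 1) :
    ∫ τ in Set.Ioi (0 : ℝ), Phi2 d (fun i => (i : ℕ) + 1) L M e τ =
      -∫ τ in Set.Ioi (0 : ℝ), τ ^ (2 * d - (l + m)) / (qe d e τ) ^ 2 := by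
  set w : Fin d → ℝ := fun i => (i : ℕ) + 1 with hw
  have e2 : ∀ τ : ℝ, τ ^ (2 * d - (l + m)) / (qe d e τ) ^ 2 = aa d L e τ * aa d M e τ :=
    fun τ => (aa_mul e τ l m hl hm hlm L M hL hM).symm
  have i1 : IntegrableOn (Phi2 d w L M e) (Set.Ioi 0) := (BB.Phi2 hd w L M).integrable hd he
    ((cont_Phi2 hd w L M he).mono Set.Ioi_subset_Ici_self)
  have i2 : IntegrableOn (fun τ => aa d L e τ * aa d M e τ) (Set.Ioi 0) :=
    BB.integrable (h := fun e τ => aa d L e τ * aa d M e τ) hd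
      (((BB.aa hd L).mul (BB.aa hd M)).mono (by omega)) he
      (((cont_aa hd L he).mul (cont_aa hd M he)).mono Set.Ioi_subset_Ici_self)
  simp only [e2]
  rw [eq_neg_iff_add_eq_zero, ← integral_add i1 i2]
  have hb : BB d (fun e τ => τ ^ 1 * (aa d L e τ * aa d M e τ)) (-1) :=
    ((BB.taupow d 1).mul ((BB.aa hd L).mul (BB.aa hd M))).mono (by push_cast; omega)
  have hlim : Tendsto (fun τ => τ ^ 1 * (aa d L e τ * aa d M e τ)) atTop (𝓝 0) := by
    obtain ⟨c, hc0, hce⟩ := exists_low hd he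
    obtain ⟨C, hC⟩ := exists_up hd e
    obtain ⟨K, hK, H⟩ := hb c C hc0
    refine squeeze_zero_norm' (a := fun τ => K * (τ + 1) ^ (-1 : ℤ)) ?_ ?_
    · filter_upwards [eventually_gt_atTop 0] with τ hτ
      exact H e (fun i => ⟨hce i, hC i⟩) τ hτ
    · have : Tendsto (fun τ : ℝ => (τ + 1)⁻¹) atTop (𝓝 0) :=
        tendsto_inv_atTop_zero.comp (tendsto_atTop_add_const_right _ _ tendsto_id)
      simpa using this.const_mul K
  have hcont : ContinuousOn (fun τ => τ ^ 1 * (aa d L e τ * aa d M e τ)) (Set.Ici 0) :=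
    (by fun_prop : Continuous fun τ : ℝ => τ ^ 1).continuousOn.mul
      ((cont_aa hd L he).mul (cont_aa hd M he))
  have key := integral_Ioi_of_hasDerivAt_of_tendsto (a := 0)
    (f := fun τ => τ ^ 1 * (aa d L e τ * aa d M e τ))
    (f' := fun τ => Phi2 d w L M e τ + aa d L e τ * aa d M e τ) (m := 0)
    (hcont 0 Set.self_mem_Ici) ?_ (i1.add i2) hlim
  · rw [key]; simp
  · intro τ hτ
    have hτ : 0 < τ := hτ
    have hq := (qe_pos hd he hτ.le).ne'
    have hqd : HasDerivAt (qe d e) (deriv (qe d e) τ) τ :=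
      (hasDeriv_qe d e τ).differentiableAt.hasDerivAt
    have hder := (hasDerivAt_pow (2 * d - (l + m) + 1) τ).mul ((hqd.pow 2).inv (pow_ne_zero 2 hq))
    refine (hder.congr_of_eventuallyEq ?_).congr_deriv ?_
    · refine Eventually.of_forall fun τ => ?_
      simp only [← e2]
      simp only [Pi.mul_apply, Pi.inv_apply, Pi.pow_apply]
      ring
    · have ht := tau_deriv hd he hτ
      rw [Phi2, ← e2]
      have ht' : deriv (qe d e) τ = qe d e τ * (d - SS d w e τ) / τ := by
        rw [← ht]; field_simp
      have hwl : w L = l := by simp [hw, hL, Nat.cast_sub hl]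
      have hwm : w M = m := by simp [hw, hM, Nat.cast_sub hm]
      rw [ht', hwl, hwm]
      have hc : ((2 * d - (l + m) + 1 : ℕ) : ℝ) = 2 * d - (l + m) + 1 := by
        rw [Nat.cast_add, Nat.cast_sub (by omega)]; push_cast; ring
      rw [hc]
      simp only [Pi.mul_apply, Pi.inv_apply, Pi.pow_apply, Nat.add_sub_cancel, pow_succ τ (2 * d - (l + m))]
      field_simp
      ring

/-- **`−∂Q/∂e_k = ∂²H/∂e_l∂e_m` for `k = l + m`.**
For positive `e₁, …, e_d` and `l, m ≥ 1` with `l + m ≤ d`: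
(i) `∂G/∂e_{l+m} = ∫₀^∞ τ^{2d−l−m}/q_e(τ)² dτ`;
(ii) `∂²F/∂e_l∂e_m = −∫₀^∞ τ^{2d−l−m}/q_e(τ)² dτ`;
hence `−∂G/∂e_{l+m} = ∂²F/∂e_l∂e_m`. -/
theorem subentropy_entropy_derivative_relation (d : ℕ) (hd : 2 ≤ d)
    (e : Fin d → ℝ) (he : ∀ i, 0 < e i)
    (l m : ℕ) (hl : 1 ≤ l) (hm : 1 ≤ m) (hlm : l + m ≤ d) :
    (fderiv ℝ (subQ d hd) e) (Pi.single (⟨l + m - 1, by omega⟩ : Fin d) 1) =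
        ∫ τ in Set.Ioi (0 : ℝ), τ ^ (2 * d - (l + m)) / (qe d e τ) ^ 2 ∧
    (fderiv ℝ (fun e' => (fderiv ℝ (entF d hd) e')
          (Pi.single (⟨l - 1, by omega⟩ : Fin d) 1)) e)
        (Pi.single (⟨m - 1, by omega⟩ : Fin d) 1) =
        -∫ τ in Set.Ioi (0 : ℝ), τ ^ (2 * d - (l + m)) / (qe d e τ) ^ 2 ∧
    -((fderiv ℝ (subQ d hd) e) (Pi.single (⟨l + m - 1, by omega⟩ : Fin d) 1)) =
      (fderiv ℝ (fun e' => (fderiv ℝ (entF d hd) e')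
          (Pi.single (⟨l - 1, by omega⟩ : Fin d) 1)) e)
        (Pi.single (⟨m - 1, by omega⟩ : Fin d) 1) := by
  have h1 : (fderiv ℝ (subQ d hd) e) (Pi.single (⟨l + m - 1, by omega⟩ : Fin d) 1) =
        ∫ τ in Set.Ioi (0 : ℝ), τ ^ (2 * d - (l + m)) / (qe d e τ) ^ 2 := by
    have hev : subQ d hd =ᶠ[𝓝 e] fun e => ∫ τ in Set.Ioi (0 : ℝ), Phi d (fun _ => 1) e τ := by
      filter_upwards [pos_ev hd he] with e' he' using subQ_eq hd he'
    rw [hev.fderiv_eq, fd_Phi hd rfl he]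
    refine setIntegral_congr_fun measurableSet_Ioi fun τ hτ => ?_
    have hq := (qe_pos hd he (le_of_lt hτ)).ne'
    have hs := sum_aa hd he hτ
    have h0 : l + m - 1 ≠ 0 := by omega
    have hp : 2 * d - (l + m) = d + (d - 1 - (l + m - 1)) := by omega
    simp only [Phi1, SS, one_mul, hs, dl, h0, if_false, hp, pow_add]
    simp only [aa]
    field_simp
    ring
  have h2 : (fderiv ℝ (fun e' => (fderiv ℝ (entF d hd) e')
          (Pi.single (⟨l - 1, by omega⟩ : Fin d) 1)) e)
        (Pi.single (⟨m - 1, by omega⟩ : Fin d) 1) =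
        -∫ τ in Set.Ioi (0 : ℝ), τ ^ (2 * d - (l + m)) / (qe d e τ) ^ 2 := by
    have hw : (fun i : Fin d => ((i : ℕ) : ℝ) + 1) ⟨0, by omega⟩ = 1 := by simp
    have hev : (fun e' => (fderiv ℝ (entF d hd) e') (Pi.single (⟨l - 1, by omega⟩ : Fin d) 1))
        =ᶠ[𝓝 e] fun e => ∫ τ in Set.Ioi (0 : ℝ),
          Phi1 d (fun i => (i : ℕ) + 1) ⟨l - 1, by omega⟩ e τ := by
      filter_upwards [pos_ev hd he] with e' he'
      have hev' : entF d hd =ᶠ[𝓝 e'] fun e => ∫ τ in Set.Ioi (0 : ℝ),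
          Phi d (fun i => (i : ℕ) + 1) e τ := by
        filter_upwards [pos_ev hd he'] with e'' he'' using entF_eq hd he''
      rw [hev'.fderiv_eq, fd_Phi hd hw he']
    rw [hev.fderiv_eq, fd_Phi1 hd hw he]
    exact by_parts hd he l m hl hm hlm _ _ rfl rfl
  exact ⟨h1, h2, by rw [h1, h2]⟩
end

section
/- Let d ≥ 2 be an integer and let e₂,…,e_d be nonnegative real numbers, not all zero. Then the entropy at e₁ = 1, given by the half-axis formula F(1,e₂,…,e_d) = ∫₀^∞ [ ln(τ^d + τ^{d−1} + Σ_{k=2}^d e_k τ^{d−k}) + (1−d) ln τ − ln(τ+1) ] dτ, admits the Levy–Khintchine representation F(1,e₂,…,e_d) = ∫₀^∞ ∫₀^∞ ( 1 − exp( −t·Σ_{i=2}^d e_i τ^{d−i} ) ) · t^{−1} · exp( −t(τ^d + τ^{d−1}) ) dt dτ, where both integrals are over (0,∞). -/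
open MeasureTheory Real

/-- The Frullani integral for the exponential. -/
lemma frullani_exp (a b : ℝ) (ha : 0 < a) (hb : 0 ≤ b) :
    ∫ t in Set.Ioi (0 : ℝ), (1 - Real.exp (-(t * b))) * t⁻¹ * Real.exp (-(t * a)) =
      Real.log ((a + b) / a) := by
  have hc : Continuous (fun x : ℝ => Real.exp (-x)) := by fun_prop
  have heq : ∀ t : ℝ, (1 - Real.exp (-(t * b))) * t⁻¹ * Real.exp (-(t * a)) =
      t⁻¹ • (Real.exp (-(a * t)) - Real.exp (-((a + b) * t))) := by
    intro t
    have h : Real.exp (-((a + b) * t)) = Real.exp (-(t * b)) * Real.exp (-(t * a)) := by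
      rw [← Real.exp_add]; congr 1; ring
    rw [smul_eq_mul, h, mul_comm a t]; ring
  have hint : IntegrableOn
      (fun t : ℝ => t⁻¹ • (Real.exp (-(a * t)) - Real.exp (-((a + b) * t)))) (Set.Ioi 0) := by
    have hdom : IntegrableOn (fun t : ℝ => b * Real.exp (-a * t)) (Set.Ioi 0) :=
      (integrableOn_exp_mul_Ioi (neg_lt_zero.mpr ha) 0).const_mul b
    refine Integrable.mono' hdom (by fun_prop) ?_
    refine (ae_restrict_iff' measurableSet_Ioi).mpr (Filter.Eventually.of_forall fun t ht => ?_)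
    have ht : 0 < t := ht
    rw [← heq]
    have h1 : 1 - Real.exp (-(t * b)) ≤ t * b := by
      have := Real.add_one_le_exp (-(t * b)); linarith
    have h0 : 0 ≤ 1 - Real.exp (-(t * b)) := by
      have : Real.exp (-(t * b)) ≤ 1 := Real.exp_le_one_iff.mpr (by
        have := mul_nonneg ht.le hb; linarith)
      linarith
    rw [Real.norm_of_nonneg (by positivity)]
    have h2 : (1 - Real.exp (-(t * b))) * t⁻¹ ≤ b := by
      rw [← div_eq_mul_inv, div_le_iff₀ ht]; linarith
    have h3 : -(t * a) = -a * t := by ring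
    rw [h3]
    exact mul_le_mul_of_nonneg_right h2 (Real.exp_pos _).le
  have key := Frullani.integral_Ioi_eq (f := fun x : ℝ => Real.exp (-x)) (L := 1) (R := 0)
    (hc.locallyIntegrable.locallyIntegrableOn _) ha (by linarith : 0 < a + b)
    (by simpa using (hc.tendsto 0).mono_left nhdsWithin_le_nhds)
    Real.tendsto_exp_neg_atTop_nhds_zero hint
  simp_rw [heq]
  simpa using key

/-- **Levy–Khintchine representation of the entropy at `e₁ = 1`.**
For `d ≥ 2` and nonnegative `e₂, …, e_d`, not all zero, with
`q(τ) = τ^d + τ^{d−1} + Σ_{k=2}^d e_k τ^{d−k}`: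
`∫₀^∞ [ln q(τ) + (1−d) ln τ − ln(τ+1)] dτ
  = ∫₀^∞ ∫₀^∞ (1 − e^{−t Σ_{i=2}^d eᵢ τ^{d−i}}) t⁻¹ e^{−t(τ^d+τ^{d−1})} dt dτ`. -/
theorem entropy_levy_khintchine (d : ℕ) (hd : 2 ≤ d) (e : ℕ → ℝ)
    (he : ∀ k, 2 ≤ k → k ≤ d → 0 ≤ e k)
    (hne : ∃ k, 2 ≤ k ∧ k ≤ d ∧ e k ≠ 0) :
    (∫ τ in Set.Ioi (0 : ℝ),
        (Real.log (τ ^ d + τ ^ (d - 1) + ∑ k ∈ Finset.Icc 2 d, e k * τ ^ (d - k))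
          + (1 - (d : ℝ)) * Real.log τ - Real.log (τ + 1))) =
      ∫ τ in Set.Ioi (0 : ℝ), ∫ t in Set.Ioi (0 : ℝ),
        (1 - Real.exp (-(t * ∑ i ∈ Finset.Icc 2 d, e i * τ ^ (d - i)))) * t⁻¹ *
          Real.exp (-(t * (τ ^ d + τ ^ (d - 1)))) := by
  refine setIntegral_congr_fun measurableSet_Ioi fun τ hτ => ?_
  have hτ : 0 < τ := hτ
  have hS : 0 ≤ ∑ k ∈ Finset.Icc 2 d, e k * τ ^ (d - k) :=
    Finset.sum_nonneg fun k hk => by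
      rw [Finset.mem_Icc] at hk
      exact mul_nonneg (he k hk.1 hk.2) (by positivity)
  have ha : 0 < τ ^ d + τ ^ (d - 1) := by positivity
  rw [frullani_exp _ _ ha hS, Real.log_div (by positivity) ha.ne']
  have h1 : τ ^ d + τ ^ (d - 1) = τ ^ (d - 1) * (τ + 1) := by
    obtain ⟨n, rfl⟩ : ∃ n, d = n + 1 := ⟨d - 1, by omega⟩
    simp only [Nat.add_sub_cancel]; ring
  have h2 : Real.log (τ ^ d + τ ^ (d - 1)) = ((d : ℝ) - 1) * Real.log τ + Real.log (τ + 1) := by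
    rw [h1, Real.log_mul (by positivity) (by positivity), Real.log_pow,
      Nat.cast_sub (by omega), Nat.cast_one]
  rw [h2]; ring
end

section
/- Let d ≥ 2 be an integer and let e₂,…,e_d be nonnegative real numbers, not all zero. Then the subentropy at e₁ = 1, given by the half-axis formula G(1,e₂,…,e_d) = ∫₀^∞ [ 1 − τ^d/(τ^d + τ^{d−1} + Σ_{k=2}^d e_k τ^{d−k}) − 1/(τ+1) ] dτ, admits the Levy–Khintchine representation G(1,e₂,…,e_d) = ∫₀^∞ ∫₀^∞ ( 1 − exp( −t·Σ_{i=2}^d e_i τ^{d−i} ) ) · τ^d · exp( −t(τ^d + τ^{d−1}) ) dt dτ, where both integrals are over (0,∞). -/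
open MeasureTheory Real

/-- **Levy–Khintchine representation of the subentropy at `e₁ = 1`.**
For `d ≥ 2` and nonnegative `e₂, …, e_d`, not all zero, with
`q(τ) = τ^d + τ^{d−1} + Σ_{k=2}^d e_k τ^{d−k}`:
`∫₀^∞ [1 − τ^d/q(τ) − 1/(τ+1)] dτ
  = ∫₀^∞ ∫₀^∞ (1 − e^{−t Σ_{i=2}^d eᵢ τ^{d−i}}) τ^d e^{−t(τ^d+τ^{d−1})} dt dτ`. -/
theorem subentropy_levy_khintchine (d : ℕ) (hd : 2 ≤ d) (e : ℕ → ℝ)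
    (he : ∀ k, 2 ≤ k → k ≤ d → 0 ≤ e k)
    (hne : ∃ k, 2 ≤ k ∧ k ≤ d ∧ e k ≠ 0) :
    (∫ τ in Set.Ioi (0 : ℝ),
        (1 - τ ^ d / (τ ^ d + τ ^ (d - 1) + ∑ k ∈ Finset.Icc 2 d, e k * τ ^ (d - k))
          - 1 / (τ + 1))) =
      ∫ τ in Set.Ioi (0 : ℝ), ∫ t in Set.Ioi (0 : ℝ),
        (1 - Real.exp (-(t * ∑ i ∈ Finset.Icc 2 d, e i * τ ^ (d - i)))) * τ ^ d *
          Real.exp (-(t * (τ ^ d + τ ^ (d - 1)))) := by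
  refine setIntegral_congr_fun measurableSet_Ioi fun τ hτ => ?_
  have hτ' : (0 : ℝ) < τ := hτ
  have hs : 0 ≤ ∑ i ∈ Finset.Icc 2 d, e i * τ ^ (d - i) :=
    Finset.sum_nonneg fun k hk => mul_nonneg
      (he k (Finset.mem_Icc.1 hk).1 (Finset.mem_Icc.1 hk).2) (pow_nonneg hτ'.le _)
  beta_reduce
  generalize (∑ i ∈ Finset.Icc 2 d, e i * τ ^ (d - i)) = s at hs ⊢
  obtain ⟨n, rfl⟩ : ∃ n, d = n + 1 := ⟨d - 1, by omega⟩
  simp only [Nat.add_sub_cancel]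
  have hn : 0 < τ ^ n := pow_pos hτ' n
  have ha : 0 < τ ^ (n + 1) + τ ^ n := by positivity
  have has : 0 < τ ^ (n + 1) + τ ^ n + s := by positivity
  have key : ∀ t : ℝ, (1 - Real.exp (-(t * s))) * τ ^ (n + 1) *
      Real.exp (-(t * (τ ^ (n + 1) + τ ^ n))) =
      τ ^ (n + 1) * (Real.exp (-(τ ^ (n + 1) + τ ^ n) * t) -
        Real.exp (-(τ ^ (n + 1) + τ ^ n + s) * t)) := by
    intro t
    have h1 : -(τ ^ (n + 1) + τ ^ n + s) * t =
        -(t * s) + -(t * (τ ^ (n + 1) + τ ^ n)) := by ring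
    have h2 : -(τ ^ (n + 1) + τ ^ n) * t = -(t * (τ ^ (n + 1) + τ ^ n)) := by ring
    rw [h1, h2, Real.exp_add]
    ring
  simp_rw [key]
  rw [integral_const_mul, integral_sub
    (integrableOn_exp_mul_Ioi (neg_lt_zero.2 ha) 0)
    (integrableOn_exp_mul_Ioi (neg_lt_zero.2 has) 0),
    integral_exp_mul_Ioi (neg_lt_zero.2 ha), integral_exp_mul_Ioi (neg_lt_zero.2 has)]
  simp only [mul_zero, Real.exp_zero, neg_div_neg_eq]
  have h3 : τ ^ (n + 1) * (1 / (τ ^ (n + 1) + τ ^ n)) = 1 - 1 / (τ + 1) := by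
    have : τ ^ (n + 1) + τ ^ n = τ ^ n * (τ + 1) := by ring
    rw [this]
    have : τ + 1 ≠ 0 := by positivity
    field_simp
    ring
  rw [mul_sub, h3]
  ring
end

section
/- Let d ≥ 2 be an integer, fix k with 2 ≤ k ≤ d, and fix positive reals e_j > 0 for each j ∈ {2,…,d} with j ≠ k. For a complex number z with Im z > 0, define Φ(z) = ∫₀^∞ [ Log( τ^d + τ^{d−1} + Σ_{j∈{2,…,d}, j≠k} e_j τ^{d−j} + z·τ^{d−k} ) + (1−d)·ln τ − ln(τ+1) ] dτ, where Log is the principal branch of the complex logarithm and the integral is over τ ∈ (0,∞). Then Im Φ(z) > 0. (That is, the entropy H(1,e₂,…,e_d) is a Pick function of each variable e_k separately: its analytic continuation maps the upper half-plane into itself.) -/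
open MeasureTheory Real

lemma pick_aux (w : ℝ → ℂ) (hm : Measurable w) (S T c K : ℝ) (n : ℕ)
    (hT : 1 ≤ T) (hc : 0 < c)
    (him : ∀ t, 0 < t → 0 < (w t).im)
    (hlow : ∀ t, 0 < t → t ≤ T → c ≤ (w t).im)
    (hup : ∀ t, 0 < t → t ≤ T → ‖1 + w t‖ ≤ K / t ^ n)
    (hfar : ∀ t, T < t → ‖w t‖ ≤ S * t ^ (-2 : ℝ))
    (hhalf : ∀ t, T < t → ‖w t‖ ≤ 1 / 2) :
    0 < (∫ t in Set.Ioi (0 : ℝ), Complex.log (1 + w t)).im := by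
  have hmeas : Measurable (fun t => Complex.log (1 + w t)) :=
    Complex.measurable_log.comp (measurable_const.add hm)
  have hfarI : IntegrableOn (fun t => Complex.log (1 + w t)) (Set.Ioi T) := by
    have h1 : IntegrableOn (fun t : ℝ => 3 / 2 * (S * t ^ (-2 : ℝ))) (Set.Ioi T) :=
      ((integrableOn_Ioi_rpow_of_lt (by norm_num) (by linarith)).const_mul S).const_mul _
    refine Integrable.mono' h1 hmeas.aestronglyMeasurable ?_
    refine (ae_restrict_iff' measurableSet_Ioi).2 (Filter.Eventually.of_forall fun t ht => ?_)
    have := Complex.norm_log_one_add_half_le_self (hhalf t ht)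
    have := hfar t ht
    linarith
  have hnear : IntegrableOn (fun t => Complex.log (1 + w t)) (Set.Ioc 0 T) := by
    have hl : IntegrableOn Real.log (Set.Ioc 0 T) :=
      (intervalIntegrable_iff_integrableOn_Ioc_of_le (by linarith)).1
        intervalIntegral.intervalIntegrable_log'
    have hcst : ∀ a : ℝ, IntegrableOn (fun _ : ℝ => a) (Set.Ioc 0 T) := fun a =>
      integrableOn_const (by simp)
    have h1 : IntegrableOn (fun t : ℝ => (|Real.log c| + |Real.log K| + π)
        + (n : ℝ) * ‖Real.log t‖) (Set.Ioc 0 T) :=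
      (hcst _).add (hl.norm.const_mul _)
    refine Integrable.mono' h1 hmeas.aestronglyMeasurable ?_
    refine (ae_restrict_iff' measurableSet_Ioc).2 (Filter.Eventually.of_forall fun t ht => ?_)
    have hn1 := Complex.norm_le_abs_re_add_abs_im (Complex.log (1 + w t))
    rw [Complex.log_re, Complex.log_im] at hn1
    have hn2 := Complex.abs_arg_le_pi (1 + w t)
    have hge : c ≤ ‖1 + w t‖ := by
      have := hlow t ht.1 ht.2
      have h3 := Complex.abs_im_le_norm (1 + w t)
      simp only [Complex.add_im, Complex.one_im, zero_add] at h3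
      exact this.trans ((le_abs_self _).trans h3)
    have hle := hup t ht.1 ht.2
    have htn : 0 < t ^ n := pow_pos ht.1 n
    have hpos : 0 < K / t ^ n := by linarith
    have hK : 0 < K := by
      have := mul_pos hpos htn
      rwa [div_mul_cancel₀ _ htn.ne'] at this
    have e1 := Real.log_le_log hc hge
    have e2 := Real.log_le_log (by linarith) hle
    rw [Real.log_div hK.ne' htn.ne', Real.log_pow] at e2
    have a1 := neg_abs_le (Real.log c)
    have a2 := le_abs_self (Real.log K)
    have a3 : -((n : ℝ) * Real.log t) ≤ n * ‖Real.log t‖ := by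
      rw [← mul_neg, Real.norm_eq_abs]
      exact mul_le_mul_of_nonneg_left (neg_le_abs _) (Nat.cast_nonneg n)
    have a4 : 0 ≤ (n : ℝ) * ‖Real.log t‖ := by positivity
    have a5 := abs_nonneg (Real.log c)
    have a6 := abs_nonneg (Real.log K)
    have : |Real.log ‖1 + w t‖| ≤ |Real.log c| + |Real.log K| + n * ‖Real.log t‖ :=
      abs_le.2 ⟨by linarith, by linarith⟩
    linarith
  have hI : IntegrableOn (fun t => Complex.log (1 + w t)) (Set.Ioi 0) := by
    rw [← Set.Ioc_union_Ioi_eq_Ioi (show (0 : ℝ) ≤ T by linarith)]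
    exact hnear.union hfarI
  have key : (∫ t in Set.Ioi (0 : ℝ), Complex.log (1 + w t)).im
      = ∫ t in Set.Ioi (0 : ℝ), (Complex.log (1 + w t)).im :=
    (Complex.imCLM.integral_comp_comm hI).symm
  have hp : ∀ t ∈ Set.Ioi (0 : ℝ), 0 < (Complex.log (1 + w t)).im := by
    intro t ht
    have h0 := him t ht
    rw [Complex.log_im]
    have hi : (1 + w t).im = (w t).im := by simp
    have h1 : 0 ≤ Complex.arg (1 + w t) := Complex.arg_nonneg_iff.2 (by rw [hi]; exact h0.le)
    refine lt_of_le_of_ne h1 fun h => ?_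
    have := (Complex.arg_eq_zero_iff.1 h.symm).2
    rw [hi] at this
    exact h0.ne' this
  rw [key, setIntegral_pos_iff_support_of_nonneg_ae]
  · have : Function.support (fun t => (Complex.log (1 + w t)).im) ∩ Set.Ioi 0 = Set.Ioi 0 :=
      Set.inter_eq_right.2 fun t ht => (hp t ht).ne'
    rw [this]; simp
  · exact (ae_restrict_iff' measurableSet_Ioi).2
      (Filter.Eventually.of_forall fun t ht => (hp t ht).le)
  · exact hI.im

/-- **The entropy is a Pick function of each symmetric-polynomial variable.**
For `d ≥ 2`, `2 ≤ k ≤ d`, fixed positive `e_j` (`j ∈ {2,…,d}`, `j ≠ k`), and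
`z ∈ ℂ` with `Im z > 0`, the analytic continuation
`Φ(z) = ∫₀^∞ [Log(τ^d + τ^{d−1} + Σ_{j≠k} e_j τ^{d−j} + z τ^{d−k})
  + (1−d) ln τ − ln(τ+1)] dτ` satisfies `Im Φ(z) > 0`. -/
theorem entropy_pick_function (d k : ℕ) (hd : 2 ≤ d) (hk2 : 2 ≤ k) (hkd : k ≤ d)
    (e : ℕ → ℝ) (he : ∀ j ∈ (Finset.Icc 2 d).erase k, 0 < e j)
    (z : ℂ) (hz : 0 < z.im) :
    0 < (∫ τ in Set.Ioi (0 : ℝ),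
        (Complex.log ((τ : ℂ) ^ d + (τ : ℂ) ^ (d - 1)
            + (∑ j ∈ (Finset.Icc 2 d).erase k, (e j : ℂ) * (τ : ℂ) ^ (d - j))
            + z * (τ : ℂ) ^ (d - k))
          + ((1 : ℂ) - (d : ℂ)) * (Real.log τ : ℂ)
          - (Real.log (τ + 1) : ℂ))).im := by
  set J := (Finset.Icc 2 d).erase k with hJ
  have hJ2 : ∀ j ∈ J, 2 ≤ j := fun j hj => (Finset.mem_Icc.1 (Finset.mem_of_mem_erase hj)).1
  let B : ℝ → ℂ := fun t => (∑ j ∈ J, (e j : ℂ) * (t : ℂ) ^ (d - j)) + z * (t : ℂ) ^ (d - k)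
  let r : ℝ → ℝ := fun t => t ^ (d - 1) * (t + 1)
  let w : ℝ → ℂ := fun t => ((r t)⁻¹ : ℝ) * B t
  have hr : ∀ t, 0 < t → 0 < r t := fun t ht => by positivity
  have hBim : ∀ t, (B t).im = z.im * t ^ (d - k) := by
    intro t
    simp only [B, Complex.add_im, Complex.im_sum, ← Complex.ofReal_pow, ← Complex.ofReal_mul,
      Complex.ofReal_im, Finset.sum_const_zero, zero_add, Complex.im_mul_ofReal]
  have hwim : ∀ t, (w t).im = (r t)⁻¹ * (z.im * t ^ (d - k)) := by
    intro t
    simp only [w, Complex.im_ofReal_mul, hBim]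
  have him : ∀ t, 0 < t → 0 < (w t).im := by
    intro t ht
    have := hr t ht
    rw [hwim]; positivity
  have heq : ∀ t ∈ Set.Ioi (0 : ℝ), (Complex.log ((t : ℂ) ^ d + (t : ℂ) ^ (d - 1)
            + (∑ j ∈ J, (e j : ℂ) * (t : ℂ) ^ (d - j))
            + z * (t : ℂ) ^ (d - k))
          + ((1 : ℂ) - (d : ℂ)) * (Real.log t : ℂ)
          - (Real.log (t + 1) : ℂ)) = Complex.log (1 + w t) := by
    intro t ht
    have ht : 0 < t := ht
    have hrt := hr t ht
    have hA : (t : ℂ) ^ d + (t : ℂ) ^ (d - 1)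
            + (∑ j ∈ J, (e j : ℂ) * (t : ℂ) ^ (d - j))
            + z * (t : ℂ) ^ (d - k) = (r t : ℝ) * (1 + w t) := by
      have h1 : ((r t : ℝ) : ℂ) * w t = B t := by
        simp only [w]
        rw [← mul_assoc, ← Complex.ofReal_mul, mul_inv_cancel₀ hrt.ne']; simp
      rw [mul_add, h1]
      have h2 : ((r t : ℝ) : ℂ) = (t : ℂ) ^ d + (t : ℂ) ^ (d - 1) := by
        obtain ⟨m, rfl⟩ : ∃ m, d = m + 1 := ⟨d - 1, by omega⟩
        simp only [r, Nat.add_sub_cancel]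
        push_cast
        ring
      rw [h2]; simp only [B]; ring
    have hne : (1 + w t) ≠ 0 := by
      intro h
      have h3 := congrArg Complex.im h
      simp only [Complex.add_im, Complex.one_im, zero_add, Complex.zero_im] at h3
      exact (him t ht).ne' h3
    rw [hA, Complex.log_ofReal_mul hrt hne]
    have h4 : Real.log (r t) = ((d : ℝ) - 1) * Real.log t + Real.log (t + 1) := by
      simp only [r]
      rw [Real.log_mul (by positivity) (by positivity), Real.log_pow,
        Nat.cast_sub (by omega)]
      simp
    rw [h4]; push_cast; ring
  rw [setIntegral_congr_fun measurableSet_Ioi heq]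
  set S : ℝ := (∑ j ∈ J, e j) + ‖z‖ with hS
  have hS0 : 0 ≤ S := add_nonneg (Finset.sum_nonneg fun j hj => (he j hj).le) (norm_nonneg _)
  -- general bound on B
  have hB : ∀ t M : ℝ, 0 < t → (∀ j, 2 ≤ j → t ^ (d - j) ≤ M) → ‖B t‖ ≤ S * M := by
    intro t M ht hM
    have hnt : ∀ m : ℕ, ‖(t : ℂ) ^ m‖ = t ^ m := fun m => by
      rw [norm_pow, Complex.norm_real, Real.norm_of_nonneg ht.le]
    simp only [B]
    refine (norm_add_le _ _).trans ?_
    rw [hS, add_mul, norm_mul, hnt, Finset.sum_mul]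
    refine add_le_add ((norm_sum_le _ _).trans (Finset.sum_le_sum fun j hj => ?_))
      (mul_le_mul_of_nonneg_left (hM k hk2) (norm_nonneg _))
    rw [norm_mul, hnt, Complex.norm_real, Real.norm_of_nonneg (he j hj).le]
    exact mul_le_mul_of_nonneg_left (hM j (hJ2 j hj)) (he j hj).le
  have hwn : ∀ t, 0 < t → ‖w t‖ = ‖B t‖ / r t := by
    intro t ht
    simp only [w]
    rw [norm_mul, Complex.norm_real, Real.norm_of_nonneg (inv_nonneg.2 (hr t ht).le)]
    field_simp
  set T : ℝ := 1 + 2 * S with hTdef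
  have hT : 1 ≤ T := by linarith
  have hfar : ∀ t, T < t → ‖w t‖ ≤ S / t ^ 2 := by
    intro t ht
    have ht1 : 1 ≤ t := by linarith
    have ht0 : 0 < t := by linarith
    rw [hwn t ht0]
    have h1 := hB t (t ^ (d - 2)) ht0 fun j hj => pow_le_pow_right₀ ht1 (by omega)
    rw [div_le_div_iff₀ (hr t ht0) (by positivity)]
    have h2 : t ^ (d - 2) * t ^ 2 ≤ r t := by
      obtain ⟨m, rfl⟩ : ∃ m, d = m + 2 := ⟨d - 2, by omega⟩
      simp only [r, Nat.add_sub_cancel, show m + 2 - 1 = m + 1 by omega]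
      have : 0 < t ^ (m + 1) := by positivity
      calc t ^ m * t ^ 2 = t ^ (m + 1) * t := by ring
        _ ≤ _ := mul_le_mul_of_nonneg_left (by linarith) this.le
    calc ‖B t‖ * t ^ 2 ≤ S * t ^ (d - 2) * t ^ 2 := by gcongr
      _ = S * (t ^ (d - 2) * t ^ 2) := by ring
      _ ≤ S * r t := by gcongr
  refine pick_aux w ?_ S T ((T ^ (d - 1) * (T + 1))⁻¹ * z.im) (T ^ d + S * T ^ d) (d - 1) hT
    (by positivity) him ?_ ?_ ?_ ?_
  · have h1 : Measurable fun t : ℝ => (((r t)⁻¹ : ℝ) : ℂ) := by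
      simp only [r]; fun_prop
    have h2 : Measurable B := by
      simp only [B]; fun_prop
    exact h1.mul h2
  · intro t ht htT
    rw [hwim]
    have hrt := hr t ht
    have h0 : (T ^ (d - 1) * (T + 1))⁻¹ ≤ (r t)⁻¹ * t ^ (d - k) := by
      have e1 : (r t)⁻¹ * t ^ (d - k) = (t ^ (k - 1) * (t + 1))⁻¹ := by
        have : t ^ (d - 1) = t ^ (d - k) * t ^ (k - 1) := by
          rw [← pow_add]; congr 1; omega
        simp only [r]
        rw [this]
        field_simp
      rw [e1]
      refine inv_anti₀ (by positivity) ?_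
      have : t ^ (k - 1) ≤ T ^ (d - 1) :=
        (pow_le_pow_left₀ ht.le htT _).trans (pow_le_pow_right₀ hT (by omega))
      gcongr
    calc _ ≤ ((r t)⁻¹ * t ^ (d - k)) * z.im := by gcongr
      _ = _ := by ring
  · intro t ht htT
    have hrt := hr t ht
    have htn : 0 < t ^ (d - 1) := by positivity
    have h1 := hB t (T ^ d) ht fun j hj =>
      (pow_le_pow_left₀ ht.le htT _).trans (pow_le_pow_right₀ hT (by omega))
    have h2 : ‖w t‖ ≤ S * T ^ d / t ^ (d - 1) := by
      rw [hwn t ht]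
      have : t ^ (d - 1) ≤ r t := le_mul_of_one_le_right htn.le (by linarith)
      gcongr
    have h3 : 1 ≤ T ^ d / t ^ (d - 1) := by
      rw [one_le_div htn]
      exact (pow_le_pow_left₀ ht.le htT _).trans (pow_le_pow_right₀ hT (by omega))
    rw [add_div]
    refine (norm_add_le _ _).trans ?_
    rw [norm_one]
    exact add_le_add h3 h2
  · intro t ht
    refine (hfar t ht).trans_eq ?_
    rw [Real.rpow_neg (by linarith), div_eq_mul_inv]
    norm_cast
  · intro t ht
    refine (hfar t ht).trans ?_
    rw [div_le_div_iff₀ (by have : 0 < t := by linarith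
                            positivity) (by norm_num)]
    nlinarith
end

section
/- Let d ≥ 2 be an integer, fix k with 2 ≤ k ≤ d, and fix positive reals e_j > 0 for each j ∈ {2,…,d} with j ≠ k. For a complex number z with Im z > 0, define Ψ(z) = ∫₀^∞ [ 1 − τ^d / ( τ^d + τ^{d−1} + Σ_{j∈{2,…,d}, j≠k} e_j τ^{d−j} + z·τ^{d−k} ) − 1/(τ+1) ] dτ, the integral being over τ ∈ (0,∞). Then Im Ψ(z) > 0. (That is, the subentropy Q(1,e₂,…,e_d) is a Pick function of each variable e_k separately: its analytic continuation maps the upper half-plane into itself.) -/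
open MeasureTheory Real

/-- The lower-order part of the denominator. -/
noncomputable def subR (d k : ℕ) (e : ℕ → ℝ) (z : ℂ) (t : ℝ) : ℂ :=
  (∑ j ∈ (Finset.Icc 2 d).erase k, (e j : ℂ) * (t : ℂ) ^ (d - j)) + z * (t : ℂ) ^ (d - k)

/-- The denominator. -/
noncomputable def subP (d k : ℕ) (e : ℕ → ℝ) (z : ℂ) (t : ℝ) : ℂ :=
  (t : ℂ) ^ d + (t : ℂ) ^ (d - 1)
            + (∑ j ∈ (Finset.Icc 2 d).erase k, (e j : ℂ) * (t : ℂ) ^ (d - j))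
            + z * (t : ℂ) ^ (d - k)

theorem subP_eq (d k : ℕ) (e : ℕ → ℝ) (z : ℂ) (t : ℝ) :
    subP d k e z t = (((t ^ d + t ^ (d - 1)
      + ∑ j ∈ (Finset.Icc 2 d).erase k, e j * t ^ (d - j) : ℝ)) : ℂ)
      + z * ((t ^ (d - k) : ℝ) : ℂ) := by
  unfold subP
  push_cast
  rfl

theorem subP_im (d k : ℕ) (e : ℕ → ℝ) (z : ℂ) (t : ℝ) :
    (subP d k e z t).im = z.im * t ^ (d - k) := by
  rw [subP_eq, Complex.add_im, Complex.ofReal_im, Complex.im_mul_ofReal, zero_add]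

theorem subP_ne (d k : ℕ) (hd : 2 ≤ d) (hkd : k ≤ d)
    (e : ℕ → ℝ) (he : ∀ j ∈ (Finset.Icc 2 d).erase k, 0 < e j)
    (z : ℂ) (hz : 0 < z.im) (t : ℝ) (ht : 0 ≤ t) : subP d k e z t ≠ 0 := by
  intro h
  have him := subP_im d k e z t
  rw [h, Complex.zero_im] at him
  have h0 : t ^ (d - k) = 0 := by
    rcases mul_eq_zero.1 him.symm with h1 | h1
    · exact absurd h1 hz.ne'
    · exact h1
  have hne : d - k ≠ 0 := by
    intro h1
    rw [h1] at h0
    simp at h0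
  rw [subP_eq, h0, Complex.ofReal_zero, mul_zero, add_zero, Complex.ofReal_eq_zero] at h
  have hmem : d ∈ (Finset.Icc 2 d).erase k := by
    simp only [Finset.mem_erase, Finset.mem_Icc]
    omega
  have h2 : e d * t ^ (d - d) ≤ ∑ j ∈ (Finset.Icc 2 d).erase k, e j * t ^ (d - j) :=
    Finset.single_le_sum (f := fun j => e j * t ^ (d - j))
      (fun j hj => mul_nonneg (he j hj).le (pow_nonneg ht _)) hmem
  rw [Nat.sub_self, pow_zero, mul_one] at h2
  have := he d hmem
  have := pow_nonneg ht d
  have := pow_nonneg ht (d - 1)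
  linarith

theorem subR_bound (d k : ℕ) (hk2 : 2 ≤ k)
    (e : ℕ → ℝ) (he : ∀ j ∈ (Finset.Icc 2 d).erase k, 0 < e j)
    (z : ℂ) (t : ℝ) (ht : 1 ≤ t) :
    ‖subR d k e z t‖ ≤ ((∑ j ∈ (Finset.Icc 2 d).erase k, e j) + ‖z‖) * t ^ (d - 2) := by
  have h0 : 0 ≤ t := by linarith
  unfold subR
  refine (norm_add_le _ _).trans ?_
  rw [add_mul, Finset.sum_mul]
  refine add_le_add ((norm_sum_le _ _).trans (Finset.sum_le_sum fun j hj => ?_)) ?_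
  · rw [norm_mul, norm_pow, Complex.norm_real, Complex.norm_real, Real.norm_of_nonneg h0,
      Real.norm_of_nonneg (he j hj).le]
    have := (he j hj).le
    simp only [Finset.mem_erase, Finset.mem_Icc] at hj
    have := pow_le_pow_right₀ ht (show d - j ≤ d - 2 by omega)
    gcongr
  · rw [norm_mul, norm_pow, Complex.norm_real, Real.norm_of_nonneg h0]
    have := pow_le_pow_right₀ ht (show d - k ≤ d - 2 by omega)
    gcongr

theorem sub_bound (d k : ℕ) (hd : 2 ≤ d) (hk2 : 2 ≤ k) (hkd : k ≤ d)
    (e : ℕ → ℝ) (he : ∀ j ∈ (Finset.Icc 2 d).erase k, 0 < e j)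
    (z : ℂ) (hz : 0 < z.im) (t : ℝ) (ht : 1 ≤ t)
    (htC : (∑ j ∈ (Finset.Icc 2 d).erase k, e j) + ‖z‖ ≤ t) :
    ‖(1 : ℂ) - (t : ℂ) ^ d / subP d k e z t - 1 / ((t : ℂ) + 1)‖
      ≤ ((∑ j ∈ (Finset.Icc 2 d).erase k, e j) + ‖z‖) * t ^ (-2 : ℝ) := by
  have hR := subR_bound d k hk2 e he z t ht
  have hP := subP_ne d k hd hkd e he z hz t (by linarith)
  have hC0 : 0 ≤ (∑ j ∈ (Finset.Icc 2 d).erase k, e j) + ‖z‖ :=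
    add_nonneg (Finset.sum_nonneg fun j hj => (he j hj).le) (norm_nonneg _)
  set C := (∑ j ∈ (Finset.Icc 2 d).erase k, e j) + ‖z‖ with hC
  have h0 : 0 < t := by linarith
  obtain ⟨m, rfl⟩ : ∃ m, d = m + 2 := ⟨d - 2, by omega⟩
  have hPR : subP (m + 2) k e z t = (t : ℂ) ^ (m + 2) + (t : ℂ) ^ (m + 1) + subR (m + 2) k e z t := by
    unfold subP subR
    rw [show m + 2 - 1 = m + 1 from rfl]
    ring
  rw [Nat.add_sub_cancel] at hR
  generalize subR (m + 2) k e z t = R at *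
  generalize subP (m + 2) k e z t = P at *
  have ht1 : (t : ℂ) + 1 ≠ 0 := by
    have : ((t + 1 : ℝ) : ℂ) ≠ 0 := Complex.ofReal_ne_zero.2 (by linarith)
    simpa using this
  have key : (1 : ℂ) - (t : ℂ) ^ (m + 2) / P - 1 / ((t : ℂ) + 1) = R * t / (P * (t + 1)) := by
    field_simp
    rw [hPR]
    ring
  have hPn : t ^ (m + 2) ≤ ‖P‖ := by
    have h1 : ‖(t : ℂ) ^ (m + 2) + (t : ℂ) ^ (m + 1)‖ = t ^ (m + 2) + t ^ (m + 1) := by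
      rw [← Complex.ofReal_pow, ← Complex.ofReal_pow, ← Complex.ofReal_add, Complex.norm_real,
        Real.norm_of_nonneg (by positivity)]
    have h2 : ‖(t : ℂ) ^ (m + 2) + (t : ℂ) ^ (m + 1)‖ ≤ ‖P‖ + ‖R‖ := by
      have : (t : ℂ) ^ (m + 2) + (t : ℂ) ^ (m + 1) = P - R := by rw [hPR]; ring
      rw [this]
      exact norm_sub_le _ _
    have h3 : C * t ^ m ≤ t ^ (m + 1) := by
      rw [pow_succ']
      gcongr
    linarith
  have ht1n : t ≤ ‖(t : ℂ) + 1‖ := by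
    have : (t : ℂ) + 1 = ((t + 1 : ℝ) : ℂ) := by push_cast; rfl
    rw [this, Complex.norm_real, Real.norm_of_nonneg (by linarith)]
    linarith
  rw [key, norm_div, norm_mul, norm_mul, Complex.norm_real, Real.norm_of_nonneg h0.le]
  calc ‖R‖ * t / (‖P‖ * ‖(t : ℂ) + 1‖) ≤ (C * t ^ m) * t / (t ^ (m + 2) * t) := by gcongr
    _ = C * t ^ (-2 : ℝ) := by
      rw [Real.rpow_neg h0.le, show (2 : ℝ) = ((2 : ℕ) : ℝ) by norm_num, Real.rpow_natCast]
      field_simp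
      ring

theorem sub_integrable (d k : ℕ) (hd : 2 ≤ d) (hk2 : 2 ≤ k) (hkd : k ≤ d)
    (e : ℕ → ℝ) (he : ∀ j ∈ (Finset.Icc 2 d).erase k, 0 < e j)
    (z : ℂ) (hz : 0 < z.im) :
    IntegrableOn (fun t : ℝ => (1 : ℂ) - (t : ℂ) ^ d / subP d k e z t - 1 / ((t : ℂ) + 1))
      (Set.Ioi 0) := by
  have hcont : ContinuousOn
      (fun t : ℝ => (1 : ℂ) - (t : ℂ) ^ d / subP d k e z t - 1 / ((t : ℂ) + 1)) (Set.Ici 0) := by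
    have hPc : Continuous (subP d k e z) := by
      unfold subP
      fun_prop
    refine ContinuousOn.sub (ContinuousOn.sub continuousOn_const
      (ContinuousOn.div (by fun_prop) hPc.continuousOn
        fun t ht => subP_ne d k hd hkd e he z hz t ht))
      (ContinuousOn.div continuousOn_const (by fun_prop) fun t ht => ?_)
    have ht' : (0 : ℝ) ≤ t := ht
    have : ((t + 1 : ℝ) : ℂ) ≠ 0 := Complex.ofReal_ne_zero.2 (by linarith)
    simpa using this
  set C := (∑ j ∈ (Finset.Icc 2 d).erase k, e j) + ‖z‖ with hC
  set T := max 1 C with hT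
  have hT1 : 1 ≤ T := le_max_left _ _
  have hT0 : 0 < T := by linarith
  rw [← Set.Ioc_union_Ioi_eq_Ioi hT0.le]
  refine IntegrableOn.union ?_ ?_
  · exact ((hcont.mono Set.Icc_subset_Ici_self).integrableOn_Icc).mono_set Set.Ioc_subset_Icc_self
  · have hg : IntegrableOn (fun t : ℝ => C * t ^ (-2 : ℝ)) (Set.Ioi T) :=
      (integrableOn_Ioi_rpow_of_lt (by norm_num) hT0).const_mul C
    refine Integrable.mono' hg ?_ ?_
    · exact (hcont.mono fun t ht => (hT0.trans ht).le).aestronglyMeasurable measurableSet_Ioi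
    · filter_upwards [ae_restrict_mem measurableSet_Ioi] with t ht
      have ht' : T < t := ht
      exact sub_bound d k hd hk2 hkd e he z hz t (by linarith) ((le_max_right 1 C).trans ht'.le)

theorem sub_im_pos (d k : ℕ) (hd : 2 ≤ d) (hkd : k ≤ d)
    (e : ℕ → ℝ) (he : ∀ j ∈ (Finset.Icc 2 d).erase k, 0 < e j)
    (z : ℂ) (hz : 0 < z.im) (t : ℝ) (ht : 0 < t) :
    0 < ((1 : ℂ) - (t : ℂ) ^ d / subP d k e z t - 1 / ((t : ℂ) + 1)).im := by
  have hP := subP_ne d k hd hkd e he z hz t ht.le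
  have h1 : (1 / ((t : ℂ) + 1)).im = 0 := by
    have : 1 / ((t : ℂ) + 1) = ((1 / (t + 1) : ℝ) : ℂ) := by push_cast; rfl
    rw [this, Complex.ofReal_im]
  have h2 : ((t : ℂ) ^ d / subP d k e z t).im
      = - (t ^ d * (z.im * t ^ (d - k)) / Complex.normSq (subP d k e z t)) := by
    rw [← Complex.ofReal_pow, div_eq_mul_inv, Complex.im_ofReal_mul, Complex.inv_im, subP_im]
    ring
  rw [Complex.sub_im, Complex.sub_im, h1, h2, Complex.one_im]
  have : 0 < Complex.normSq (subP d k e z t) := Complex.normSq_pos.2 hP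
  have : 0 < t ^ d * (z.im * t ^ (d - k)) / Complex.normSq (subP d k e z t) := by positivity
  linarith

/-- **The subentropy is a Pick function of each symmetric-polynomial variable.**
For `d ≥ 2`, `2 ≤ k ≤ d`, fixed positive `e_j` (`j ∈ {2,…,d}`, `j ≠ k`), and
`z ∈ ℂ` with `Im z > 0`, the analytic continuation
`Ψ(z) = ∫₀^∞ [1 − τ^d/(τ^d + τ^{d−1} + Σ_{j≠k} e_j τ^{d−j} + z τ^{d−k})
  − 1/(τ+1)] dτ` satisfies `Im Ψ(z) > 0`. -/
theorem subentropy_pick_function (d k : ℕ) (hd : 2 ≤ d) (hk2 : 2 ≤ k) (hkd : k ≤ d)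
    (e : ℕ → ℝ) (he : ∀ j ∈ (Finset.Icc 2 d).erase k, 0 < e j)
    (z : ℂ) (hz : 0 < z.im) :
    0 < (∫ τ in Set.Ioi (0 : ℝ),
        ((1 : ℂ) - (τ : ℂ) ^ d / ((τ : ℂ) ^ d + (τ : ℂ) ^ (d - 1)
            + (∑ j ∈ (Finset.Icc 2 d).erase k, (e j : ℂ) * (τ : ℂ) ^ (d - j))
            + z * (τ : ℂ) ^ (d - k))
          - 1 / ((τ : ℂ) + 1))).im := by
  have hint := sub_integrable d k hd hk2 hkd e he z hz
  have hpos := sub_im_pos d k hd hkd e he z hz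
  change 0 < (∫ τ in Set.Ioi (0 : ℝ),
        ((1 : ℂ) - (τ : ℂ) ^ d / subP d k e z τ - 1 / ((τ : ℂ) + 1))).im
  have him := integral_im hint
  simp only [RCLike.im_to_complex] at him
  rw [← him]
  have hint2 := hint.im
  simp only [RCLike.im_to_complex] at hint2
  rw [setIntegral_pos_iff_support_of_nonneg_ae ?_ hint2]
  · have : Set.Ioi (0 : ℝ) ⊆ (Function.support fun τ : ℝ =>
        ((1 : ℂ) - (τ : ℂ) ^ d / subP d k e z τ - 1 / ((τ : ℂ) + 1)).im) ∩ Set.Ioi 0 :=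
      fun t ht => ⟨(hpos t ht).ne', ht⟩
    refine lt_of_lt_of_le ?_ (measure_mono this)
    simp
  · filter_upwards [ae_restrict_mem measurableSet_Ioi] with t ht
    exact (hpos t ht).le
end

section
/- Let d ≥ 2 be an integer and let x = (x₁,…,x_d) and y = (y₁,…,y_d) be vectors of pairwise distinct positive reals, each arranged in strictly decreasing order (x₁ > x₂ > ⋯ > x_d and y₁ > y₂ > ⋯ > y_d). Suppose y majorizes x, i.e. Σ_{i=1}^k x_i ≤ Σ_{i=1}^k y_i for every 1 ≤ k ≤ d−1 and Σ_{i=1}^d x_i = Σ_{i=1}^d y_i. Then the subentropy satisfies Q(y₁,…,y_d) ≤ Q(x₁,…,x_d). (That is, Q is Schur concave in the variables x₁,…,x_d.) -/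
open Real Finset

/-- The coefficients of the divided difference of `t ^ d * log t`. -/
noncomputable def subCoeff (d : ℕ) (x : ℕ → ℝ) (i : ℕ) : ℝ :=
  x i ^ d / ∏ j ∈ (Finset.range d).erase i, (x i - x j)

lemma subCoeff_injOn (d : ℕ) (x : ℕ → ℝ) (hxdec : ∀ i j, i < j → j < d → x j < x i) :
    Set.InjOn x (Finset.range d : Finset ℕ) := by
  intro i hi j hj h
  simp only [Finset.coe_range, Set.mem_Iio] at hi hj
  rcases lt_trichotomy i j with hij | hij | hij
  · exact absurd h (hxdec i j hij hj).ne'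
  · exact hij
  · exact absurd h (hxdec j i hij hi).ne

open Polynomial in
lemma sub_degree (d : ℕ) (x : ℕ → ℝ) :
    ((X : ℝ[X]) ^ d - Lagrange.nodal (Finset.range d) x).degree < #(Finset.range d) := by
  have h1 : ((X : ℝ[X]) ^ d).degree = (Lagrange.nodal (Finset.range d) x).degree := by
    rw [Lagrange.degree_nodal, degree_X_pow, Finset.card_range]
  have := degree_sub_lt_right h1 Lagrange.nodal_ne_zero
    (by rw [(monic_X_pow d).leadingCoeff, Lagrange.nodal_monic.leadingCoeff])
  rwa [Lagrange.degree_nodal] at this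

open Polynomial in
lemma sub_eval (d : ℕ) (x : ℕ → ℝ) (i : ℕ) (hi : i ∈ Finset.range d) :
    ((X : ℝ[X]) ^ d - Lagrange.nodal (Finset.range d) x).eval (x i) = x i ^ d := by
  rw [eval_sub, Lagrange.eval_nodal_at_node hi]; simp

open Polynomial in
lemma sum_subCoeff (d : ℕ) (hd : 2 ≤ d) (x : ℕ → ℝ)
    (hxdec : ∀ i j, i < j → j < d → x j < x i) :
    ∑ i ∈ Finset.range d, subCoeff d x i = ∑ i ∈ Finset.range d, x i := by
  have h := Lagrange.coeff_eq_sum (subCoeff_injOn d x hxdec) (sub_degree d x)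
  rw [coeff_sub, Lagrange.nodal_eq, prod_X_sub_C_coeff_card_pred _ _ (by simp; omega)] at h
  rw [coeff_X_pow, if_neg (by simp; omega), zero_sub, neg_neg] at h
  rw [h]
  refine Finset.sum_congr rfl fun i hi => ?_
  have := sub_eval d x i hi
  rw [Lagrange.nodal_eq] at this
  rw [this, subCoeff]

open Polynomial in
lemma sum_subCoeff_div (d : ℕ) (x : ℕ → ℝ)
    (hx : ∀ i < d, 0 < x i)
    (hxdec : ∀ i j, i < j → j < d → x j < x i) (s : ℝ) (hs : 0 ≤ s) :
    ∑ i ∈ Finset.range d, subCoeff d x i * (s + x i)⁻¹ =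
      1 - s ^ d / ∏ i ∈ Finset.range d, (s + x i) := by
  have h := Lagrange.eq_interpolate_of_eval_eq (r := fun i => x i ^ d)
    (f := (X : ℝ[X]) ^ d - Lagrange.nodal (Finset.range d) x) (v := x)
    (subCoeff_injOn d x hxdec) (sub_degree d x) (sub_eval d x)
  have h2 := congrArg (eval (-s)) h
  rw [Lagrange.eval_interpolate_not_at_node, eval_sub, eval_pow, eval_X, Lagrange.eval_nodal] at h2
  · have h3 : ∏ i ∈ Finset.range d, (-s - x i) =
        (-1) ^ d * ∏ i ∈ Finset.range d, (s + x i) := by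
      rw [← Finset.card_range d, ← Finset.prod_const, Finset.card_range, ← Finset.prod_mul_distrib]
      exact Finset.prod_congr rfl fun i _ => by ring
    have h4 : ∑ i ∈ Finset.range d,
        Lagrange.nodalWeight (Finset.range d) x i * (-s - x i)⁻¹ * x i ^ d =
        - ∑ i ∈ Finset.range d, subCoeff d x i * (s + x i)⁻¹ := by
      rw [← Finset.sum_neg_distrib]
      refine Finset.sum_congr rfl fun i _ => ?_
      rw [subCoeff, Lagrange.nodalWeight, Finset.prod_inv_distrib,
        show -s - x i = -(s + x i) by ring, inv_neg, div_eq_mul_inv]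
      ring
    have hP : 0 < ∏ i ∈ Finset.range d, (s + x i) :=
      Finset.prod_pos fun i hi => by have := hx i (Finset.mem_range.1 hi); linarith
    rw [h3, h4, neg_pow] at h2
    have h5 : s ^ d - ∏ i ∈ Finset.range d, (s + x i) = (∏ i ∈ Finset.range d, (s + x i)) *
        -∑ i ∈ Finset.range d, subCoeff d x i * (s + x i)⁻¹ := by
      have : ((-1 : ℝ)) ^ d ≠ 0 := pow_ne_zero _ (by norm_num)
      apply mul_left_cancel₀ this
      linarith
    rw [eq_sub_iff_add_eq, ← eq_sub_iff_add_eq', div_eq_iff hP.ne']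
    linarith
  · intro i hi
    have := hx i (Finset.mem_range.1 hi)
    linarith

lemma prod_le_prod_of_maj (d : ℕ) (hd : 2 ≤ d) (x y : ℕ → ℝ)
    (hx : ∀ i < d, 0 < x i) (hy : ∀ i < d, 0 < y i)
    (hxdec : ∀ i j, i < j → j < d → x j < x i)
    (hmaj : ∀ k, 1 ≤ k → k ≤ d - 1 →
      ∑ i ∈ Finset.range k, x i ≤ ∑ i ∈ Finset.range k, y i)
    (hsum : ∑ i ∈ Finset.range d, x i = ∑ i ∈ Finset.range d, y i) (s : ℝ) (hs : 0 ≤ s) :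
    ∏ i ∈ Finset.range d, (s + y i) ≤ ∏ i ∈ Finset.range d, (s + x i) := by
  have hP : 0 < ∏ i ∈ Finset.range d, (s + x i) :=
    Finset.prod_pos fun i hi => by have := hx i (Finset.mem_range.1 hi); linarith
  rw [← div_le_one hP, ← Finset.prod_div_distrib]
  have habel : ∑ i ∈ Finset.range d, (s + x i)⁻¹ * (y i - x i) ≤ 0 := by
    have := Finset.sum_range_by_parts (fun i => (s + x i)⁻¹) (fun i => y i - x i) d
    simp only [smul_eq_mul] at this
    rw [this, Finset.sum_sub_distrib, hsum, sub_self, mul_zero, zero_sub, neg_nonpos]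
    refine Finset.sum_nonneg fun i hi => mul_nonneg ?_ ?_
    · have hi' := Finset.mem_range.1 hi
      rw [sub_nonneg]
      have h1 := hx (i + 1) (by omega)
      have h2 := hxdec i (i + 1) (by omega) (by omega)
      exact inv_anti₀ (by linarith) (by linarith)
    · have hi' := Finset.mem_range.1 hi
      rw [Finset.sum_sub_distrib, sub_nonneg]
      exact hmaj _ (by omega) (by omega)
  calc ∏ i ∈ Finset.range d, (s + y i) / (s + x i)
      ≤ ∏ i ∈ Finset.range d, Real.exp ((s + x i)⁻¹ * (y i - x i)) := by
        refine Finset.prod_le_prod (fun i hi => ?_) (fun i hi => ?_)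
        · have h1 := hx i (Finset.mem_range.1 hi)
          have h2 := hy i (Finset.mem_range.1 hi)
          positivity
        · have h1 := hx i (Finset.mem_range.1 hi)
          refine le_trans (le_of_eq ?_) (Real.add_one_le_exp _)
          have : s + x i ≠ 0 := by positivity
          field_simp
          ring
    _ = Real.exp (∑ i ∈ Finset.range d, (s + x i)⁻¹ * (y i - x i)) := (Real.exp_sum _ _).symm
    _ ≤ 1 := Real.exp_le_one_iff.2 habel

/-- Shifted logarithmic sum. -/
noncomputable def subLog (d : ℕ) (x : ℕ → ℝ) (s : ℝ) : ℝ :=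
  ∑ i ∈ Finset.range d, subCoeff d x i * Real.log (s + x i)

lemma subLog_hasDerivAt (d : ℕ) (x : ℕ → ℝ) (hx : ∀ i < d, 0 < x i)
    (hxdec : ∀ i j, i < j → j < d → x j < x i) (s : ℝ) (hs : 0 ≤ s) :
    HasDerivAt (subLog d x) (1 - s ^ d / ∏ i ∈ Finset.range d, (s + x i)) s := by
  rw [← sum_subCoeff_div d x hx hxdec s hs]
  unfold subLog
  refine HasDerivAt.fun_sum fun i hi => ?_
  have h1 := hx i (Finset.mem_range.1 hi)
  have h2 : s + x i ≠ 0 := by positivity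
  have := (((hasDerivAt_id s).add_const (x i)).log h2).const_mul (subCoeff d x i)
  simpa using this

lemma subLog_tendsto (d : ℕ) (x : ℕ → ℝ) :
    Filter.Tendsto (fun s => subLog d x s - (∑ i ∈ Finset.range d, subCoeff d x i) * Real.log s)
      Filter.atTop (nhds 0) := by
  have : Filter.Tendsto (fun s => ∑ i ∈ Finset.range d,
      subCoeff d x i * (Real.log (s + x i) - Real.log s)) Filter.atTop
      (nhds (∑ i ∈ Finset.range d, subCoeff d x i * 0)) :=
    tendsto_finsetSum _ fun i _ => (Real.tendsto_log_comp_add_sub_log (x i)).const_mul _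
  simp only [mul_zero, Finset.sum_const_zero] at this
  refine this.congr fun s => ?_
  simp only [subLog, mul_sub, Finset.sum_sub_distrib, Finset.sum_mul]

/-- **Schur concavity of the subentropy.**
Let `d ≥ 2` and let `x₀ > x₁ > ⋯ > x_{d−1} > 0` and `y₀ > y₁ > ⋯ > y_{d−1} > 0`
(indexed over `range d`). If `y` majorizes `x`, i.e. all partial sums of `y`
dominate those of `x` and the total sums agree, then `Q(y) ≤ Q(x)`, where
`Q(x) = −Σᵢ (xᵢ^d / ∏_{j≠i}(xᵢ−xⱼ)) ln xᵢ`. -/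
theorem subentropy_schur_concave (d : ℕ) (hd : 2 ≤ d) (x y : ℕ → ℝ)
    (hx : ∀ i < d, 0 < x i) (hy : ∀ i < d, 0 < y i)
    (hxdec : ∀ i j, i < j → j < d → x j < x i)
    (hydec : ∀ i j, i < j → j < d → y j < y i)
    (hmaj : ∀ k, 1 ≤ k → k ≤ d - 1 →
      ∑ i ∈ Finset.range k, x i ≤ ∑ i ∈ Finset.range k, y i)
    (hsum : ∑ i ∈ Finset.range d, x i = ∑ i ∈ Finset.range d, y i) :
    (-∑ i ∈ Finset.range d,
        (y i ^ d / ∏ j ∈ (Finset.range d).erase i, (y i - y j)) * Real.log (y i)) ≤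
      -∑ i ∈ Finset.range d,
        (x i ^ d / ∏ j ∈ (Finset.range d).erase i, (x i - x j)) * Real.log (x i) := by
  have hlim : Filter.Tendsto (fun s => subLog d x s - subLog d y s) Filter.atTop (nhds 0) := by
    have := (subLog_tendsto d x).sub (subLog_tendsto d y)
    rw [sum_subCoeff d hd x hxdec, sum_subCoeff d hd y hydec, hsum, sub_zero] at this
    exact this.congr fun s => by ring
  have hder : ∀ s : ℝ, 0 ≤ s → HasDerivAt (fun s => subLog d x s - subLog d y s)
      ((1 - s ^ d / ∏ i ∈ Finset.range d, (s + x i)) -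
        (1 - s ^ d / ∏ i ∈ Finset.range d, (s + y i))) s := fun s hs =>
    (subLog_hasDerivAt d x hx hxdec s hs).sub (subLog_hasDerivAt d y hy hydec s hs)
  have hmono : MonotoneOn (fun s => subLog d x s - subLog d y s) (Set.Ici 0) := by
    refine monotoneOn_of_deriv_nonneg (convex_Ici 0)
      (fun s hs => (hder s hs).continuousAt.continuousWithinAt) ?_ ?_
    · intro s hs
      rw [interior_Ici] at hs
      exact (hder s (le_of_lt hs)).differentiableAt.differentiableWithinAt
    · intro s hs
      rw [interior_Ici] at hs
      have hs0 : 0 ≤ s := le_of_lt hs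
      rw [(hder s hs0).deriv]
      have hle := prod_le_prod_of_maj d hd x y hx hy hxdec hmaj hsum s hs0
      have hP : 0 < ∏ i ∈ Finset.range d, (s + y i) :=
        Finset.prod_pos fun i hi => by have := hy i (Finset.mem_range.1 hi); linarith
      have := div_le_div_of_nonneg_left (pow_nonneg hs0 d) hP hle
      linarith
  have h0 : subLog d x 0 - subLog d y 0 ≤ 0 := by
    refine ge_of_tendsto hlim ?_
    filter_upwards [Filter.eventually_ge_atTop (0 : ℝ)] with s hs
    exact hmono (Set.mem_Ici.2 le_rfl) (Set.mem_Ici.2 hs) hs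
  simp only [subLog, subCoeff, zero_add] at h0
  linarith
end
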